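/- arXiv:1512.05752 — 2 statements merged into one kernel-verified Lean document; each statement's English description precedes it below -/
import Mathlib

section
/- Let L be a finite-dimensional solvable Leibniz algebra over a field F with φ(L) = 0 which is minimally non-supersolvable (L is not supersolvable but every proper subalgebra of L is supersolvable). Then either (1) L is strongly solvable and L = A ∔ ⟨x⟩ where A is the unique minimal ideal of L and dim A > 1; or (2) L is not strongly solvable, F has characteristic p > 0, L has a unique minimal ideal A with basis {e₁, …, e_p}, and either (a) L = A + ⟨x,y⟩ with xe_i = e_{i+1}, ye_i = (α + i)e_i (indices mod p), yx = x, and every a ∈ F equals t^p − t for some t ∈ F, or (b) L = A + ⟨x,y,z⟩ with xe_i = e_{i+1}, ye_i = (i+1)e_{i−1}, ze_i = e_i (indices mod p), yx = z, xz = yz = 0, and F is perfect when p = 2. Moreover, either L is a Lie algebra, or else in the above structure A = Leib(L) and A·L = 0. -/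
/-!
Basic theory of (left) Leibniz algebras, formalized over an arbitrary field `F`.
A Leibniz algebra structure on an `F`-vector space `L` is given by a bilinear
multiplication `m : L →ₗ[F] L →ₗ[F] L` satisfying the left Leibniz identity.
-/

open Submodule Module

section LeibnizDefs

variable {F : Type*} [Field F] {L : Type*} [AddCommGroup L] [Module F L]
variable (m : L →ₗ[F] L →ₗ[F] L)

/-- The left Leibniz identity: `a(bc) = (ab)c + b(ac)`. -/
def IsLeibniz : Prop :=
  ∀ a b c : L, m a (m b c) = m (m a b) c + m b (m a c)

/-- The multiplication is antisymmetric, i.e. the algebra is a Lie algebra. -/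
def IsLie : Prop := ∀ a b : L, m a b = - m b a

/-- The product of two subspaces: the span of all products `x·y`, `x ∈ P`, `y ∈ Q`. -/
abbrev mprod (P Q : Submodule F L) : Submodule F L := Submodule.map₂ m P Q

/-- A subalgebra: a subspace closed under multiplication. -/
def IsSubalg (S : Submodule F L) : Prop := ∀ x ∈ S, ∀ y ∈ S, m x y ∈ S

/-- An ideal of `L`: a subspace `I` with `L·I ⊆ I` and `I·L ⊆ I`. -/
def IsIdeal (I : Submodule F L) : Prop :=
  ∀ (x : L), ∀ y ∈ I, m x y ∈ I ∧ m y x ∈ I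

/-- An ideal `I` of a subalgebra `S`. -/
def IsIdealOf (S I : Submodule F L) : Prop :=
  I ≤ S ∧ ∀ x ∈ S, ∀ y ∈ I, m x y ∈ I ∧ m y x ∈ I

/-- A minimal ideal: a nonzero ideal containing no nonzero proper subideal of `L`. -/
def IsMinIdeal (A : Submodule F L) : Prop :=
  IsIdeal m A ∧ A ≠ ⊥ ∧ ∀ J, IsIdeal m J → J ≤ A → J = ⊥ ∨ J = A

/-- The derived series of a subspace: `S^(0) = S`, `S^(n+1) = S^(n)·S^(n)`. -/
def derSeries (S : Submodule F L) : ℕ → Submodule F L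
  | 0 => S
  | n + 1 => mprod m (derSeries S n) (derSeries S n)

/-- A subalgebra is solvable if its derived series reaches `0`. -/
def IsSolvableSub (S : Submodule F L) : Prop := ∃ n, derSeries m S n = ⊥

/-- The Leibniz algebra `L` is solvable. -/
abbrev IsSolvableAlg : Prop := IsSolvableSub m (⊤ : Submodule F L)

/-- The lower central series of a subspace: `N^1 = N`, `N^(k+1) = N·N^k`. -/
def lcSeries (N : Submodule F L) : ℕ → Submodule F L
  | 0 => N
  | k + 1 => mprod m N (lcSeries N k)

/-- A subalgebra is nilpotent if its lower central series reaches `0`. -/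
def IsNilpotentSub (N : Submodule F L) : Prop := ∃ k, lcSeries m N k = ⊥

/-- A subalgebra `S` is strongly solvable if `S² = S·S` is nilpotent. -/
def IsStronglySolvable (S : Submodule F L) : Prop :=
  IsNilpotentSub m (mprod m S S)

/-- A maximal subalgebra: a proper subalgebra not contained in any larger proper
subalgebra. -/
def IsMaxSubalg (S : Submodule F L) : Prop :=
  IsSubalg m S ∧ S ≠ ⊤ ∧ ∀ T, IsSubalg m T → S ≤ T → T = S ∨ T = ⊤

/-- The Frattini subalgebra `F(L)`: the intersection of all maximal subalgebras. -/
def frattiniSub : Submodule F L := sInf {S | IsMaxSubalg m S}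

/-- The Frattini ideal `φ(L)`: the largest ideal contained in the Frattini
subalgebra. -/
def frattiniIdeal : Submodule F L :=
  sSup {I | IsIdeal m I ∧ I ≤ frattiniSub m}

/-- `Leib(L)`: the span of all squares `x·x`. -/
def leibIdeal : Submodule F L := Submodule.span F {z | ∃ x : L, z = m x x}

/-- The subalgebra generated by a set. -/
def genBy (s : Set L) : Submodule F L := sInf {S | IsSubalg m S ∧ s ⊆ S}

/-- A subalgebra is two-generated if it is generated as an algebra by two elements. -/
def TwoGenerated (S : Submodule F L) : Prop := ∃ x y : L, genBy m {x, y} = S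

/-- A subalgebra `S` is supersolvable if there is a chain of ideals of `S`,
`0 = S₀ ⊂ S₁ ⊂ ⋯ ⊂ Sₙ = S`, with `dim Sᵢ = i`. -/
def IsSupersolvable (S : Submodule F L) : Prop :=
  ∃ (n : ℕ) (c : ℕ → Submodule F L), c 0 = ⊥ ∧ c n = S ∧
    (∀ i, i < n → c i ≤ c (i + 1)) ∧
    (∀ i, i ≤ n → IsIdealOf m S (c i)) ∧
    (∀ i, i ≤ n → Module.finrank F (c i) = i)

/-- A subspace `S` is nil on `L` if left multiplication by each of its elements is a
nilpotent operator. -/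
def IsNilOn (S : Submodule F L) : Prop :=
  ∀ x ∈ S, IsNilpotent (m x : Module.End F L)

open scoped TensorProduct in
/-- A subspace `S` is triangulable on `L` if, after extending scalars to the algebraic
closure `K` of `F`, the space `K ⊗ L` admits a basis with respect to which the left
multiplication operators by all elements of `K ⊗ S` are upper triangular matrices.
(Since upper triangular matrices form a `K`-subspace of matrices, it suffices that the
base-changed left multiplication by each `x ∈ S` is upper triangular.) -/
def IsTriangulableOn (S : Submodule F L) : Prop :=
  ∃ (n : ℕ) (b : Basis (Fin n) (AlgebraicClosure F) ((AlgebraicClosure F) ⊗[F] L)),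
    ∀ x ∈ S, ∀ i j : Fin n, j < i →
      LinearMap.toMatrix b b (LinearMap.baseChange (AlgebraicClosure F) (m x)) i j = 0

end LeibnizDefs

section Lin
variable {F : Type*} [Field F] {V : Type*} [AddCommGroup V] [Module F V] [FiniteDimensional F V]

theorem char_dvd_of_trace {p : ℕ} [CharP F p] [Nontrivial V]
    (h : ((Module.finrank F V : ℕ) : F) = 0) : p ≠ 0 ∧ p ≤ Module.finrank F V := by
  have hd : p ∣ Module.finrank F V := (CharP.cast_eq_zero_iff F p _).1 h
  have hpos : 0 < Module.finrank F V := Module.finrank_pos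
  exact ⟨fun h0 => by subst h0; simp at hd; omega, Nat.le_of_dvd hpos hd⟩

theorem linA {p : ℕ} [CharP F p] (X Y : Module.End F V)
    (irr : ∀ W : Submodule F V, (∀ a ∈ W, X a ∈ W) → (∀ a ∈ W, Y a ∈ W) → W = ⊥ ∨ W = ⊤)
    (hc : Y * X = X * Y + X) (v : V) (hv : v ≠ 0) (hXv : X v = v)
    (w : V) (hw : w ≠ 0) (α : F) (hYw : Y w = α • w) :
    p ≠ 0 ∧ ∃ e : ZMod p → V, LinearIndependent F e ∧ span F (Set.range e) = ⊤ ∧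
      (∀ i, X (e i) = e (i + 1)) ∧ (∀ i, Y (e i) = (α + (i.val : F)) • e i) := by
  have : Nontrivial V := ⟨⟨v, 0, hv⟩⟩
  have hc' : ∀ a, Y (X a) = X (Y a) + X a := fun a => by
    simpa using congrArg (fun T => T a) hc
  have hker : LinearMap.ker X = ⊥ := by
    refine (irr (LinearMap.ker X) ?_ ?_).resolve_right ?_
    · intro a ha; simp only [LinearMap.mem_ker] at ha ⊢; simp [ha]
    · intro a ha; simp only [LinearMap.mem_ker] at ha ⊢
      have := hc' a; simp [ha] at this; exact this.symm
    · intro h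
      have : v ∈ LinearMap.ker X := by rw [h]; trivial
      rw [LinearMap.mem_ker, hXv] at this; exact hv this
  have hinj : Function.Injective X := LinearMap.ker_eq_bot.1 hker
  have hsurj : Function.Surjective X := LinearMap.injective_iff_surjective.1 hinj
  obtain ⟨Z, hZ⟩ := X.exists_rightInverse_of_surjective (LinearMap.range_eq_top.2 hsurj)
  have hXZ : X * Z = 1 := hZ
  have hZX : Z * X = 1 := by
    ext a; apply hinj
    have := congrArg (fun T => T (X a)) hXZ
    simpa using this
  have htr : ((Module.finrank F V : ℕ) : F) = 0 := by
    have h1 : LinearMap.trace F V 1 = (Module.finrank F V : F) := LinearMap.trace_one F V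
    have h2 : Y * X * Z = X * Y * Z + X * Z := by rw [hc, add_mul]
    rw [mul_assoc, hXZ, mul_one] at h2
    have h3 := congrArg (LinearMap.trace F V) h2
    rw [map_add, LinearMap.trace_mul_comm, ← mul_assoc, hZX, one_mul, h1] at h3
    simpa using h3
  obtain ⟨hp, hle⟩ := char_dvd_of_trace (p := p) htr
  refine ⟨hp, ?_⟩
  have : NeZero p := ⟨hp⟩
  have hYXk : ∀ (k : ℕ) a, Y ((X ^ k) a) = (X ^ k) (Y a) + (k : F) • (X ^ k) a := by
    intro k; induction k with
    | zero => intro a; simp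
    | succ k ih =>
      intro a
      simp only [pow_succ, Module.End.mul_apply]
      rw [ih, hc', map_add]; push_cast; rw [add_smul, one_smul]; abel
  have hXp : X ^ p = 1 := by
    have h := (irr (LinearMap.ker (X ^ p - 1)) ?_ ?_).resolve_left ?_
    · rw [LinearMap.ker_eq_top] at h; exact sub_eq_zero.1 h
    · intro a ha
      simp only [LinearMap.mem_ker, LinearMap.sub_apply, Module.End.one_apply, sub_eq_zero] at ha ⊢
      rw [← Module.End.mul_apply, ← pow_succ, pow_succ', Module.End.mul_apply, ha]
    · intro a ha
      simp only [LinearMap.mem_ker, LinearMap.sub_apply, Module.End.one_apply, sub_eq_zero] at ha ⊢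
      have := hYXk p a
      rw [ha] at this; simpa using this.symm
    · intro h
      have : v ∈ LinearMap.ker (X ^ p - 1) := by
        simp only [LinearMap.mem_ker, LinearMap.sub_apply, Module.End.one_apply, sub_eq_zero]
        have : ∀ k : ℕ, (X ^ k) v = v := by
          intro k; induction k with
          | zero => simp
          | succ k ih => rw [pow_succ, Module.End.mul_apply, hXv, ih]
        exact this p
      rw [h] at this; exact hv (by simpa using this)
  have hX1 : ∀ i : ZMod p, X ((X ^ i.val) w) = (X ^ (i + 1).val) w := by
    intro i
    have : i + 1 = ((i.val + 1 : ℕ) : ZMod p) := by simp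
    rw [this, ZMod.val_natCast, ← pow_eq_pow_mod _ hXp, pow_succ', Module.End.mul_apply]
  have hY1 : ∀ i : ZMod p, Y ((X ^ i.val) w) = (α + (i.val : F)) • (X ^ i.val) w := by
    intro i; rw [hYXk, hYw, map_smul, add_smul]
  have hsp : span F (Set.range fun i : ZMod p => (X ^ i.val) w) = ⊤ := by
    refine (irr _ ?_ ?_).resolve_left ?_
    · intro a ha
      induction ha using Submodule.span_induction with
      | mem x hx =>
        obtain ⟨i, rfl⟩ := hx
        exact subset_span ⟨i + 1, (hX1 i).symm⟩
      | zero => simp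
      | add x y _ _ h1 h2 => rw [map_add]; exact add_mem h1 h2
      | smul c x _ h => rw [map_smul]; exact smul_mem _ _ h
    · intro a ha
      induction ha using Submodule.span_induction with
      | mem x hx =>
        obtain ⟨i, rfl⟩ := hx
        simp only [hY1]
        exact smul_mem _ _ (subset_span ⟨i, rfl⟩)
      | zero => simp
      | add x y _ _ h1 h2 => rw [map_add]; exact add_mem h1 h2
      | smul c x _ h => rw [map_smul]; exact smul_mem _ _ h
    · intro h
      rw [Submodule.span_eq_bot] at h
      exact hw (h w ⟨0, by simp⟩)
  refine ⟨fun i => (X ^ i.val) w, ?_, hsp, hX1, hY1⟩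
  apply linearIndependent_of_top_le_span_of_card_eq_finrank hsp.ge
  apply le_antisymm
  · rw [ZMod.card]; exact hle
  · have := finrank_range_le_card (R := F) (fun i : ZMod p => (X ^ i.val) w)
    rw [Set.finrank, hsp, finrank_top] at this; exact this

theorem linB {p : ℕ} [CharP F p] (X Y : Module.End F V)
    (irr : ∀ W : Submodule F V, (∀ a ∈ W, X a ∈ W) → (∀ a ∈ W, Y a ∈ W) → W = ⊥ ∨ W = ⊤)
    (hc : Y * X = X * Y + 1) (v : V) (hv : v ≠ 0) (hXv : X v = v)
    (w : V) (hw : w ≠ 0) (hYw : Y w = 0) :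
    p ≠ 0 ∧ ∃ e : ZMod p → V, LinearIndependent F e ∧ span F (Set.range e) = ⊤ ∧
      (∀ i, X (e i) = e (i + 1)) ∧
      (∀ i, Y (e i) = ((i.val + 1 : ℕ) : F) • e (i - 1)) := by
  have : Nontrivial V := ⟨⟨v, 0, hv⟩⟩
  have hc' : ∀ a, Y (X a) = X (Y a) + a := fun a => by
    simpa using congrArg (fun T => T a) hc
  have htr : ((Module.finrank F V : ℕ) : F) = 0 := by
    have h1 : LinearMap.trace F V 1 = (Module.finrank F V : F) := LinearMap.trace_one F V
    have h3 := congrArg (LinearMap.trace F V) hc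
    rw [map_add, LinearMap.trace_mul_comm, h1] at h3
    simpa using h3
  obtain ⟨hp, hle⟩ := char_dvd_of_trace (p := p) htr
  refine ⟨hp, ?_⟩
  have : NeZero p := ⟨hp⟩
  have hYXk : ∀ (k : ℕ) a,
      Y ((X ^ (k + 1)) a) = (X ^ (k + 1)) (Y a) + ((k + 1 : ℕ) : F) • (X ^ k) a := by
    intro k; induction k with
    | zero => intro a; simp [hc']
    | succ k ih =>
      intro a
      rw [pow_succ X (k + 1), Module.End.mul_apply, Module.End.mul_apply, ih, hc', map_add,
        pow_succ X k, Module.End.mul_apply]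
      push_cast; simp only [add_smul, one_smul, Module.End.mul_apply]; abel
  have hXp : X ^ p = 1 := by
    have h := (irr (LinearMap.ker (X ^ p - 1)) ?_ ?_).resolve_left ?_
    · rw [LinearMap.ker_eq_top] at h; exact sub_eq_zero.1 h
    · intro a ha
      simp only [LinearMap.mem_ker, LinearMap.sub_apply, Module.End.one_apply, sub_eq_zero] at ha ⊢
      rw [← Module.End.mul_apply, ← pow_succ, pow_succ', Module.End.mul_apply, ha]
    · intro a ha
      simp only [LinearMap.mem_ker, LinearMap.sub_apply, Module.End.one_apply, sub_eq_zero] at ha ⊢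
      have := hYXk (p - 1) a
      rw [Nat.sub_add_cancel (Nat.one_le_iff_ne_zero.2 hp), ha] at this; simpa using this.symm
    · intro h
      have : v ∈ LinearMap.ker (X ^ p - 1) := by
        simp only [LinearMap.mem_ker, LinearMap.sub_apply, Module.End.one_apply, sub_eq_zero]
        have : ∀ k : ℕ, (X ^ k) v = v := by
          intro k; induction k with
          | zero => simp
          | succ k ih => rw [pow_succ, Module.End.mul_apply, hXv, ih]
        exact this p
      rw [h] at this; exact hv (by simpa using this)
  have hX0 : ∀ i : ZMod p, X ^ (i + 1).val = X ^ (i.val + 1) := by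
    intro i
    have : i + 1 = ((i.val + 1 : ℕ) : ZMod p) := by simp
    rw [this, ZMod.val_natCast, ← pow_eq_pow_mod _ hXp]
  have hX1 : ∀ i : ZMod p, X ((X ^ (i.val + 1)) w) = (X ^ ((i + 1).val + 1)) w := by
    intro i
    rw [pow_succ' X (i + 1).val, hX0, Module.End.mul_apply]
  have hY1 : ∀ i : ZMod p, Y ((X ^ (i.val + 1)) w) =
      ((i.val + 1 : ℕ) : F) • (X ^ ((i - 1).val + 1)) w := by
    intro i
    rw [hYXk, hYw, map_zero, zero_add, ← hX0, sub_add_cancel]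
  have hsp : span F (Set.range fun i : ZMod p => (X ^ (i.val + 1)) w) = ⊤ := by
    refine (irr _ ?_ ?_).resolve_left ?_
    · intro a ha
      induction ha using Submodule.span_induction with
      | mem x hx =>
        obtain ⟨i, rfl⟩ := hx
        exact subset_span ⟨i + 1, (hX1 i).symm⟩
      | zero => simp
      | add x y _ _ h1 h2 => rw [map_add]; exact add_mem h1 h2
      | smul c x _ h => rw [map_smul]; exact smul_mem _ _ h
    · intro a ha
      induction ha using Submodule.span_induction with
      | mem x hx =>
        obtain ⟨i, rfl⟩ := hx
        simp only [hY1]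
        exact smul_mem _ _ (subset_span ⟨i - 1, rfl⟩)
      | zero => simp
      | add x y _ _ h1 h2 => rw [map_add]; exact add_mem h1 h2
      | smul c x _ h => rw [map_smul]; exact smul_mem _ _ h
    · intro h
      rw [Submodule.span_eq_bot] at h
      exact hw (h w ⟨-1, by simp [← hX0]⟩)
  refine ⟨fun i => (X ^ (i.val + 1)) w, ?_, hsp, hX1, hY1⟩
  apply linearIndependent_of_top_le_span_of_card_eq_finrank hsp.ge
  apply le_antisymm
  · rw [ZMod.card]; exact hle
  · have := finrank_range_le_card (R := F) (fun i : ZMod p => (X ^ (i.val + 1)) w)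
    rw [Set.finrank, hsp, finrank_top] at this; exact this

/-- Every element is of the form `t^p - t`. -/
theorem artin {p : ℕ} [Fact p.Prime] [CharP F p] (X Y : Module.End F V) (e : ZMod p → V)
    (he : LinearIndependent F e) (hsp : span F (Set.range e) = ⊤) (α : F)
    (hX : ∀ i, X (e i) = e (i + 1)) (hY : ∀ i, Y (e i) = (α + (i.val : F)) • e i)
    (b : F) (u : V) (hu : u ≠ 0) (τ : F) (h : Y u + b • X u = τ • u) :
    ∃ t : F, b = t ^ p - t := by
  by_cases hb : b = 0
  · exact ⟨0, by simp [hb, (Fact.out : p.Prime).ne_zero]⟩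
  let B := Basis.mk he hsp.ge
  have hBe : ∀ i, B i = e i := fun i => by simp [B]
  have hu' : u = ∑ i, B.repr u i • e i := by
    conv_lhs => rw [← B.sum_repr u]
    simp [hBe]
  have hXu : X u = ∑ i, B.repr u (i - 1) • e i := by
    conv_lhs => rw [hu']
    rw [map_sum, ← Equiv.sum_comp (Equiv.addRight (1 : ZMod p)) (fun i => B.repr u (i - 1) • e i)]
    simp [hX]
  have hYu : Y u = ∑ i, (B.repr u i * (α + (i.val : F))) • e i := by
    conv_lhs => rw [hu']
    rw [map_sum]
    simp [hY, smul_smul]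
  have key : ∀ i, b * B.repr u (i - 1) = (τ - α - (i.val : F)) * B.repr u i := by
    have h0 : ∑ i, (B.repr u i * (α + (i.val : F)) + b * B.repr u (i - 1) - τ * B.repr u i) • e i
        = 0 := by
      simp only [sub_smul, add_smul, mul_smul b, mul_smul τ, Finset.sum_sub_distrib,
        Finset.sum_add_distrib, ← Finset.smul_sum]
      rw [← hYu, ← hXu, ← hu', h, sub_self]
    intro i
    have := (Fintype.linearIndependent_iff.1 he) _ h0 i
    linear_combination this
  have hne : ∀ i, B.repr u i ≠ 0 := by
    intro i hi
    apply hu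
    have hall : ∀ k : ℕ, B.repr u (i - k) = 0 := by
      intro k; induction k with
      | zero => simpa using hi
      | succ k ih =>
        have := key (i - k)
        rw [ih, mul_zero] at this
        have := (mul_eq_zero.1 this).resolve_left hb
        rw [← this]; congr 1; push_cast; ring
    rw [hu']
    apply Finset.sum_eq_zero
    intro j _
    have := hall (i - j).val
    rw [ZMod.natCast_zmod_val, sub_sub_cancel] at this
    rw [this, zero_smul]
  have hprod : b ^ p = ∏ i : ZMod p, (τ - α - (i.val : F)) := by
    have h1 : ∏ i : ZMod p, (b * B.repr u (i - 1)) = ∏ i, ((τ - α - (i.val : F)) * B.repr u i) :=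
      Finset.prod_congr rfl fun i _ => key i
    rw [Finset.prod_mul_distrib, Finset.prod_mul_distrib, Finset.prod_const, Finset.card_univ,
      ZMod.card, show ∏ i : ZMod p, B.repr u (i - 1) = ∏ i, B.repr u i from
        Equiv.prod_comp (Equiv.subRight (1 : ZMod p)) (fun i => B.repr u i)] at h1
    exact mul_right_cancel₀ (Finset.prod_ne_zero_iff.2 fun i _ => hne i) h1
  have hpoly : ∏ i : ZMod p, (τ - α - (i.val : F)) = (τ - α) ^ p - (τ - α) := by
    have hpp : p.Prime := Fact.out
    have hmon : (Polynomial.X ^ p - Polynomial.X : Polynomial (ZMod p)).Monic :=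
      Polynomial.monic_X_pow_sub (by simpa using hpp.one_lt)
    have h1 := (GaloisField.splits_zmod_X_pow_sub_X p).eq_prod_roots_of_monic hmon
    have h2 := FiniteField.roots_X_pow_card_sub_X (ZMod p)
    rw [ZMod.card] at h2
    rw [h2] at h1
    have h3 := congrArg (Polynomial.eval₂ (ZMod.castHom (dvd_refl p) F) (τ - α)) h1
    rw [← Finset.prod_eq_multiset_prod, Polynomial.eval₂_finsetProd] at h3
    simpa [Polynomial.eval₂_sub] using h3.symm
  refine ⟨τ - α - b, ?_⟩
  rw [sub_pow_char, hprod, hpoly]; ring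

theorem sq_root (X Y : Module.End F V) (e : ZMod 2 → V)
    (he : LinearIndependent F e) (hsp : span F (Set.range e) = ⊤) [CharP F 2]
    (hX : ∀ i, X (e i) = e (i + 1)) (hY : ∀ i, Y (e i) = ((i.val + 1 : ℕ) : F) • e (i - 1))
    (b : F) (u : V) (hu : u ≠ 0) (τ : F) (h : X u + b • Y u = τ • u) :
    τ ^ 2 = 1 + b := by
  have h2 : (2 : F) = 0 := by exact_mod_cast CharP.cast_eq_zero F 2
  let B := Basis.mk he hsp.ge
  have hBe : ∀ i, B i = e i := fun i => by simp [B]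
  have hu' : u = B.repr u 0 • e 0 + B.repr u 1 • e 1 := by
    conv_lhs => rw [← B.sum_repr u]
    simp only [hBe]
    exact Fin.sum_univ_two _
  generalize B.repr u 0 = r at hu'
  generalize B.repr u 1 = s at hu'
  have e1 : (1 : ZMod 2) + 1 = 0 := rfl
  have e2 : (0 : ZMod 2) - 1 = 1 := rfl
  have e3 : (1 : ZMod 2).val = 1 := rfl
  have e4 : (0 : ZMod 2).val = 0 := rfl
  have hX0 : X (e 0) = e 1 := by rw [hX, zero_add]
  have hX1 : X (e 1) = e 0 := by rw [hX, e1]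
  have hY0 : Y (e 0) = e 1 := by rw [hY, e2, e4]; simp
  have hY1 : Y (e 1) = 0 := by rw [hY, e3]; norm_num; exact Or.inl h2
  subst hu'
  simp only [map_add, map_smul, hX0, hX1, hY0, hY1, smul_zero, add_zero] at h
  have h0 : ∑ i, (![s - τ * r, r + b * r - τ * s] : ZMod 2 → F) i • e i = 0 := by
    refine (Fin.sum_univ_two _).trans ?_
    change (s - τ * r) • e 0 + (r + b * r - τ * s) • e 1 = 0
    rw [smul_add, ← sub_eq_zero] at h
    rw [← h]; module
  have hh := (Fintype.linearIndependent_iff.1 he) _ h0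
  have g0 : s - τ * r = 0 := hh 0
  have g1 : r + b * r - τ * s = 0 := hh 1
  have hr : r ≠ 0 := by
    rintro rfl
    have : s = 0 := by simpa using g0
    simp [this] at hu
  apply mul_right_cancel₀ hr
  linear_combination (-τ) * g0 - g1
end Lin

section Leib
variable {F : Type*} [Field F] {L : Type*} [AddCommGroup L] [Module F L] [FiniteDimensional F L]
variable {m : L →ₗ[F] L →ₗ[F] L}

theorem step_gen {P Q : Submodule F L} (hPQ : P ≤ Q)
    (hd : Module.finrank F Q = Module.finrank F P + 1) {w : L} (hw : w ∈ Q) (hwP : w ∉ P) :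
    ∀ u ∈ Q, ∃ a : F, u - a • w ∈ P := by
  have hle : P ⊔ span F {w} ≤ Q := sup_le hPQ (by rw [span_singleton_le_iff_mem]; exact hw)
  have hlt : P < P ⊔ span F {w} := by
    refine lt_of_le_of_ne le_sup_left fun h => hwP ?_
    rw [h]; exact mem_sup_right (mem_span_singleton_self w)
  have h1 := Submodule.finrank_lt_finrank_of_lt hlt
  have heq : P ⊔ span F {w} = Q := Submodule.eq_of_le_of_finrank_le hle (by omega)
  intro u hu
  rw [← heq, mem_sup] at hu
  obtain ⟨y, hy, z, hz, rfl⟩ := hu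
  obtain ⟨a, rfl⟩ := mem_span_singleton.1 hz
  exact ⟨a, by simpa using hy⟩

theorem exists_new {P Q : Submodule F L}
    (hd : Module.finrank F Q = Module.finrank F P + 1) : ∃ w ∈ Q, w ∉ P := by
  by_contra! h
  have : Q ≤ P := h
  have := Submodule.finrank_mono this
  omega

theorem chain_inter (c : ℕ → Submodule F L) (n : ℕ) (hmono : ∀ i, i < n → c i ≤ c (i + 1))
    (hfin : ∀ i, i < n → Module.finrank F (c (i + 1)) = Module.finrank F (c i) + 1)
    (A : Submodule F L) (h0 : c 0 ⊓ A = ⊥) (hn : c n ⊓ A ≠ ⊥) :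
    ∃ i, i < n ∧ ∃ v, v ∈ c (i + 1) ∧ v ∈ A ∧ v ≠ 0 ∧
      ∀ u ∈ c (i + 1), u ∈ A → ∃ a : F, u = a • v := by
  classical
  have hex : ∃ i, c i ⊓ A ≠ ⊥ := ⟨n, hn⟩
  have hle : Nat.find hex ≤ n := Nat.find_min' hex hn
  have hsp := Nat.find_spec hex
  have hmin := fun k => Nat.find_min hex (m := k)
  generalize Nat.find hex = j at *
  cases j with
  | zero => exact absurd h0 hsp
  | succ i =>
    have hi : c i ⊓ A = ⊥ := by simpa using hmin i (by omega)
    obtain ⟨v, hv, hv0⟩ := Submodule.exists_mem_ne_zero_of_ne_bot hsp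
    rw [mem_inf] at hv
    have hvc : v ∉ c i := fun h => hv0 (by
      have : v ∈ c i ⊓ A := ⟨h, hv.2⟩
      rw [hi] at this; simpa using this)
    refine ⟨i, by omega, v, hv.1, hv.2, hv0, fun u hu huA => ?_⟩
    obtain ⟨a, ha⟩ := step_gen (hmono i (by omega)) (hfin i (by omega)) hv.1 hvc u hu
    have : u - a • v ∈ c i ⊓ A := ⟨ha, sub_mem huA (smul_mem _ _ hv.2)⟩
    rw [hi] at this
    exact ⟨a, sub_eq_zero.1 (by simpa using this)⟩

theorem eigen {A S : Submodule F L} (hA : IsIdeal m A) (hA0 : A ≠ ⊥) (hAS : A ≤ S)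
    (hS : IsSupersolvable m S) : ∃ v ∈ A, v ≠ 0 ∧ ∀ s ∈ S, ∃ t : F, m s v = t • v := by
  obtain ⟨n, c, c0, cn, cmono, cid, cdim⟩ := hS
  obtain ⟨i, hi, v, hv, hvA, hv0, h⟩ := chain_inter c n cmono
    (fun i hi => by rw [cdim _ hi, cdim _ hi.le]) A (by simp [c0])
    (by rwa [cn, inf_eq_right.2 hAS])
  exact ⟨v, hvA, hv0, fun s hs => h _ ((cid _ hi).2 s hs v hv).1 (hA s v hvA).1⟩

theorem nil_eig (hm : IsLeibniz m) {S : Submodule F L} (hS : IsSupersolvable m S)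
    {s t v : L} (hs : s ∈ S) (ht : t ∈ S) (hv : v ∈ S) {κ : F} (hκ : κ ≠ 0)
    (h : m (m s t) v = κ • v) : v = 0 := by
  obtain ⟨n, c, c0, cn, cmono, cid, cdim⟩ := hS
  have step : ∀ i, i < n → v ∈ c (i + 1) → v ∈ c i := by
    intro i hi hvi
    by_contra hvc
    have hg := step_gen (cmono i hi) (by rw [cdim _ hi, cdim _ hi.le]) hvi hvc
    obtain ⟨a, ha⟩ := hg _ ((cid _ hi).2 s hs v hvi).1
    obtain ⟨b, hb⟩ := hg _ ((cid _ hi).2 t ht v hvi).1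
    have h1 := hm s t v
    have ha' := ((cid i hi.le).2 t ht _ ha).1
    have hb' := ((cid i hi.le).2 s hs _ hb).1
    have h2 : κ • v ∈ c i := by
      rw [← h]
      have : m (m s t) v = m s (m t v - b • v) - m t (m s v - a • v)
          + b • (m s v - a • v) - a • (m t v - b • v) := by
        rw [map_sub, map_sub, map_smul, map_smul, h1, smul_sub, smul_sub, smul_smul, smul_smul,
          mul_comm b a]
        abel
      rw [this]
      exact sub_mem (add_mem (sub_mem hb' ha') (smul_mem _ _ ha)) (smul_mem _ _ hb)
    exact hvc ((Submodule.smul_mem_iff _ hκ).1 h2)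
  have : ∀ j, j ≤ n → v ∈ c (n - j) := by
    intro j; induction j with
    | zero => intro _; simpa [cn] using hv
    | succ j ih =>
      intro hj
      apply step _ (by omega)
      rw [show n - (j + 1) + 1 = n - j by omega]; exact ih (by omega)
  have := this n le_rfl
  simpa [c0] using this

theorem exists_min {C : Submodule F L} (hC : IsIdeal m C) (h0 : C ≠ ⊥) :
    ∃ A, IsMinIdeal m A ∧ A ≤ C := by
  obtain ⟨A, ⟨hA, hA0, hAC⟩, hmin⟩ := (wellFounded_lt (α := Submodule F L)).has_min
    {I | IsIdeal m I ∧ I ≠ ⊥ ∧ I ≤ C} ⟨C, hC, h0, le_rfl⟩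
  refine ⟨A, ⟨hA, hA0, fun J hJ hJA => ?_⟩, hAC⟩
  by_contra! h
  exact hmin J ⟨hJ, h.1, hJA.trans hAC⟩ (lt_of_le_of_ne hJA h.2)

theorem min_abelian (hm : IsLeibniz m) (hsolv : IsSolvableAlg m) {A : Submodule F L}
    (hA : IsMinIdeal m A) : ∀ a ∈ A, ∀ b ∈ A, m a b = 0 := by
  have hid : IsIdeal m (mprod m A A) := by
    intro l y hy
    have hP : ∀ a ∈ A, ∀ b ∈ A, m a b ∈ mprod m A A := fun a ha b hb =>
      Submodule.apply_mem_map₂ _ ha hb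
    have h1 : mprod m A A ≤ (mprod m A A).comap (m l) := Submodule.map₂_le.2 fun a ha b hb => by
      rw [mem_comap, hm]
      exact add_mem (hP _ (hA.1 l a ha).1 _ hb) (hP _ ha _ (hA.1 l b hb).1)
    have h2 : mprod m A A ≤ (mprod m A A).comap (m.flip l) :=
      Submodule.map₂_le.2 fun a ha b hb => by
        rw [mem_comap, LinearMap.flip_apply, ← sub_eq_of_eq_add (hm a b l)]
        exact sub_mem (hP _ ha _ (hA.1 l b hb).2) (hP _ hb _ (hA.1 l a ha).2)
    exact ⟨h1 hy, h2 hy⟩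
  rcases hA.2.2 _ hid (Submodule.map₂_le.2 fun a ha b hb => (hA.1 a b hb).1) with h | h
  · intro a ha b hb
    have : m a b ∈ mprod m A A := Submodule.apply_mem_map₂ _ ha hb
    rw [h] at this; simpa using this
  · obtain ⟨n, hn⟩ := hsolv
    have : ∀ k, A ≤ derSeries m ⊤ k := by
      intro k; induction k with
      | zero => exact le_top
      | succ k ih =>
        rw [← h]; exact Submodule.map₂_le_map₂ ih ih
    exact absurd (le_bot_iff.1 (hn ▸ this n)) hA.2.1

theorem exists_compl (hm : IsLeibniz m) (hsolv : IsSolvableAlg m) (hphi : frattiniIdeal m = ⊥)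
    {A : Submodule F L} (hA : IsMinIdeal m A) :
    ∃ M, IsSubalg m M ∧ M ≠ ⊤ ∧ A ⊓ M = ⊥ ∧ A ⊔ M = ⊤ := by
  have hab := min_abelian hm hsolv hA
  have h1 : ¬ A ≤ frattiniSub m := fun h => hA.2.1 <| le_bot_iff.1 <| by
    rw [← hphi]; exact le_sSup ⟨hA.1, h⟩
  rw [frattiniSub, le_sInf_iff] at h1
  push Not at h1
  obtain ⟨M, ⟨hM, hMt, hmax⟩, hAM⟩ := h1
  have hs : A ⊔ M = ⊤ := by
    refine (hmax (A ⊔ M) ?_ le_sup_right).resolve_left fun h => hAM (h ▸ le_sup_left)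
    intro u hu w hw
    obtain ⟨a, ha, b, hb, rfl⟩ := mem_sup.1 hu
    obtain ⟨a', ha', b', hb', rfl⟩ := mem_sup.1 hw
    simp only [map_add, LinearMap.add_apply]
    have := mem_sup_left (T := M) (hA.1 a a' ha').1
    have := mem_sup_left (T := M) (hA.1 b a' ha').1
    have := mem_sup_left (T := M) (hA.1 b' a ha).2
    have := mem_sup_right (S := A) (hM b hb b' hb')
    exact add_mem (add_mem ‹_› ‹_›) (add_mem ‹_› ‹_›)
  refine ⟨M, hM, hMt, ?_, hs⟩
  refine (hA.2.2 (A ⊓ M) ?_ inf_le_left).resolve_right fun h => hAM (inf_eq_left.1 h)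
  intro l y hy
  have hl : l ∈ A ⊔ M := hs ▸ mem_top
  obtain ⟨a, ha, b, hb, rfl⟩ := mem_sup.1 hl
  simp only [map_add, LinearMap.add_apply, hab a ha y hy.1, hab y hy.1 a ha, zero_add]
  exact ⟨⟨(hA.1 b y hy.1).1, hM _ hb _ hy.2⟩, ⟨(hA.1 b y hy.1).2, hM _ hy.2 _ hb⟩⟩

theorem sup_ideal {A M c : Submodule F L} (hA : IsIdeal m A) (hs : A ⊔ M = ⊤)
    (hc : IsIdealOf m M c) : IsIdeal m (A ⊔ c) := by
  intro l y hy
  have hl : l ∈ A ⊔ M := hs ▸ mem_top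
  obtain ⟨a, ha, b, hb, rfl⟩ := mem_sup.1 hl
  obtain ⟨a', ha', d, hd, rfl⟩ := mem_sup.1 hy
  simp only [map_add, LinearMap.add_apply]
  have h1 := mem_sup_left (T := c) (hA a a' ha').1
  have h2 := mem_sup_left (T := c) (hA b a' ha').1
  have h3 := mem_sup_left (T := c) (hA d a ha).2
  have h4 := mem_sup_right (S := A) (hc.2 b hb d hd).1
  have h5 := mem_sup_left (T := c) (hA a a' ha').2
  have h6 := mem_sup_left (T := c) (hA b a' ha').2
  have h7 := mem_sup_left (T := c) (hA d a ha).1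
  have h8 := mem_sup_right (S := A) (hc.2 b hb d hd).2
  exact ⟨add_mem (add_mem h1 h2) (add_mem h3 h4), add_mem (add_mem h5 h7) (add_mem h6 h8)⟩

/-- chain of ideals above a complemented ideal -/
theorem exists_chain {A M : Submodule F L} (hA : IsIdeal m A) (hi : A ⊓ M = ⊥) (hs : A ⊔ M = ⊤)
    (hM : IsSupersolvable m M) : ∃ (n : ℕ) (J : ℕ → Submodule F L), J 0 = A ∧ J n = ⊤ ∧
      (∀ i, i < n → J i ≤ J (i + 1)) ∧ (∀ i, i ≤ n → IsIdeal m (J i)) ∧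
      (∀ i, i ≤ n → Module.finrank F (J i) = Module.finrank F A + i) := by
  obtain ⟨n, c, c0, cn, cmono, cid, cdim⟩ := hM
  refine ⟨n, fun i => A ⊔ c i, by simp [c0], by simp [cn, hs],
    fun i hi => sup_le_sup_left (cmono i hi) _, fun i hi => sup_ideal hA hs (cid i hi),
    fun i hin => ?_⟩
  have h1 := Submodule.finrank_sup_add_finrank_inf_eq A (c i)
  have h2 : A ⊓ c i = ⊥ := le_bot_iff.1 (hi ▸ inf_le_inf_left _ (cid i hin).1)
  rw [h2, finrank_bot, cdim i hin] at h1
  simpa using h1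

theorem super_of_line {A M : Submodule F L} (hA : IsIdeal m A) (hi : A ⊓ M = ⊥) (hs : A ⊔ M = ⊤)
    (hM : IsSupersolvable m M) (h1 : Module.finrank F A = 1) :
    IsSupersolvable m (⊤ : Submodule F L) := by
  obtain ⟨n, J, J0, Jn, Jmono, Jid, Jdim⟩ := exists_chain hA hi hs hM
  refine ⟨n + 1, fun i => if i = 0 then ⊥ else J (i - 1), by simp, by simp [Jn], ?_, ?_, ?_⟩
  · intro i hi
    rcases i with _ | i
    · simp
    · simpa using Jmono i (by omega)
  · intro i hi
    rcases i with _ | i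
    · refine ⟨bot_le, fun x _ y hy => ?_⟩
      simp at hy; simp [hy]
    · simp only [Nat.add_eq_zero_iff, one_ne_zero, and_false, if_false, Nat.add_sub_cancel]
      exact ⟨le_top, fun x _ y hy => Jid i (by omega) x y hy⟩
  · intro i hi
    rcases i with _ | i
    · simp
    · change Module.finrank F (J i) = i + 1
      rw [Jdim i (by omega), h1]; omega

theorem isIdeal_inf {I J : Submodule F L} (hI : IsIdeal m I) (hJ : IsIdeal m J) :
    IsIdeal m (I ⊓ J) := fun x y hy =>
  ⟨⟨(hI x y hy.1).1, (hJ x y hy.2).1⟩, ⟨(hI x y hy.1).2, (hJ x y hy.2).2⟩⟩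

theorem leib_ideal (hm : IsLeibniz m) : IsIdeal m (leibIdeal m) := by
  have hsq : ∀ x : L, m x x ∈ leibIdeal m := fun x => subset_span ⟨x, rfl⟩
  intro l y hy
  induction hy using Submodule.span_induction with
  | mem y hy =>
    obtain ⟨x, rfl⟩ := hy
    constructor
    · have : m l (m x x) = m (m l x + x) (m l x + x) - m (m l x) (m l x) - m x x := by
        rw [hm]; simp only [map_add, LinearMap.add_apply]; abel
      rw [this]
      exact sub_mem (sub_mem (hsq _) (hsq _)) (hsq _)
    · have : m (m x x) l = 0 := by simpa using hm x x l
      rw [this]; exact zero_mem _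
  | zero => simp
  | add x y _ _ h1 h2 =>
    simp only [map_add, LinearMap.add_apply]
    exact ⟨add_mem h1.1 h2.1, add_mem h1.2 h2.2⟩
  | smul c x _ h =>
    simp only [map_smul, LinearMap.smul_apply]
    exact ⟨smul_mem _ _ h.1, smul_mem _ _ h.2⟩

theorem leib_left (hm : IsLeibniz m) : ∀ y ∈ leibIdeal m, ∀ l, m y l = 0 := by
  intro y hy l
  induction hy using Submodule.span_induction with
  | mem y hy => obtain ⟨x, rfl⟩ := hy; simpa using hm x x l
  | zero => simp
  | add x y _ _ h1 h2 => simp [h1, h2]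
  | smul c x _ h => simp [h]

/-- The basic structure `L = A ⊕ B`. -/
structure Core (m : L →ₗ[F] L →ₗ[F] L) (A B : Submodule F L) : Prop where
  min : IsMinIdeal m A
  ab : ∀ a ∈ A, ∀ b ∈ A, m a b = 0
  dim : 1 < Module.finrank F A
  sub : IsSubalg m B
  inf : A ⊓ B = ⊥
  sup : A ⊔ B = ⊤
  faith : ∀ b ∈ B, (∀ a ∈ A, m b a = 0) → b = 0
  alt : ∀ b ∈ B, m b b = 0
  irr : ∀ V ≤ A, (∀ b ∈ B, ∀ v ∈ V, m b v ∈ V) → V = ⊥ ∨ V = A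
  ss : ∀ S ≤ B, IsSubalg m S → S ≠ B → IsSupersolvable m (A ⊔ S)

theorem exists_core (hm : IsLeibniz m) (hsolv : IsSolvableAlg m) (hphi : frattiniIdeal m = ⊥)
    (hnot : ¬ IsSupersolvable m (⊤ : Submodule F L))
    (hproper : ∀ S : Submodule F L, IsSubalg m S → S ≠ ⊤ → IsSupersolvable m S) :
    ∃ A B, Core m A B ∧ IsSupersolvable m B ∧ (∀ A', IsMinIdeal m A' → A' = A) ∧
      (IsLie m ∨ (A = leibIdeal m ∧ ∀ a ∈ A, ∀ u : L, m a u = 0)) := by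
  have htop : (⊤ : Submodule F L) ≠ ⊥ := by
    intro h
    refine hnot ⟨0, fun _ => ⊥, rfl, h.symm, by simp, ?_, by simp⟩
    intro i _
    refine ⟨bot_le, fun x _ y hy => ?_⟩
    simp at hy; simp [hy]
  obtain ⟨A, hA, -⟩ := exists_min (m := m) (C := ⊤) (fun _ _ _ => ⟨trivial, trivial⟩) htop
  have hne1 : ∀ A', IsMinIdeal m A' → Module.finrank F A' ≠ 1 := by
    intro A' hA' h1
    obtain ⟨M, hM, hMt, hi, hs⟩ := exists_compl hm hsolv hphi hA'
    exact hnot (super_of_line hA'.1 hi hs (hproper M hM hMt) h1)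
  obtain ⟨B, hB, hBt, hi, hs⟩ := exists_compl hm hsolv hphi hA
  have hab := min_abelian hm hsolv hA
  have huniq : ∀ A', IsMinIdeal m A' → A' = A := by
    intro A' hA'
    by_contra hneq
    have hinf : A ⊓ A' = ⊥ := by
      rcases hA'.2.2 _ (isIdeal_inf hA.1 hA'.1) inf_le_right with h | h
      · exact h
      · rcases hA.2.2 _ hA'.1 (inf_eq_right.1 h) with h' | h'
        · exact absurd h' hA'.2.1
        · exact absurd h' hneq
    obtain ⟨n, J, J0, Jn, Jmono, Jid, Jdim⟩ := exists_chain hA.1 hi hs (hproper B hB hBt)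
    obtain ⟨i, hin, v, hv, hvA, hv0, h⟩ := chain_inter J n Jmono
      (fun i hi => by rw [Jdim _ hi, Jdim _ hi.le]; omega) A' (by rw [J0, hinf])
      (by rw [Jn, top_inf_eq]; exact hA'.2.1)
    apply hne1 A' hA'
    have hle : A' ≤ J (i + 1) := by
      rcases hA'.2.2 _ (isIdeal_inf (Jid (i + 1) hin) hA'.1) inf_le_right with h | h
      · have : v ∈ J (i + 1) ⊓ A' := ⟨hv, hvA⟩
        rw [h] at this; exact absurd (by simpa using this) hv0
      · exact inf_eq_right.1 h
    have : A' = span F {v} := by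
      apply le_antisymm
      · intro u hu
        obtain ⟨a, rfl⟩ := h u (hle hu) hu
        exact mem_span_singleton.2 ⟨a, rfl⟩
      · rwa [span_singleton_le_iff_mem]
    rw [this, finrank_span_singleton hv0]
  have hdec : ∀ l : L, ∃ a ∈ A, ∃ b ∈ B, l = a + b := fun l => by
    have hl : l ∈ A ⊔ B := hs ▸ mem_top
    obtain ⟨a, ha, b, hb, rfl⟩ := mem_sup.1 hl
    exact ⟨a, ha, b, hb, rfl⟩
  have hlie0 : IsLie m ∨ (A ≤ leibIdeal m ∧ ∀ a ∈ A, ∀ u : L, m a u = 0) := by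
    by_cases h : leibIdeal m = ⊥
    · left
      have hsq : ∀ x : L, m x x = 0 := fun x => by
        have : m x x ∈ leibIdeal m := subset_span ⟨x, rfl⟩
        rw [h] at this; simpa using this
      intro a b
      have := hsq (a + b)
      simp only [map_add, LinearMap.add_apply, hsq, zero_add, add_zero] at this
      rw [add_comm] at this
      exact eq_neg_of_add_eq_zero_left this
    · right
      obtain ⟨A', hA', hle⟩ := exists_min (leib_ideal hm) h
      rw [huniq A' hA'] at hle
      exact ⟨hle, fun a ha => leib_left hm a (hle ha)⟩
  have hright : ∀ a ∈ A, ∀ u, m u a = 0 → m a u = 0 := by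
    intro a ha u hu
    rcases hlie0 with h | h
    · rw [h, hu, neg_zero]
    · exact h.2 a ha u
  have hfaith : ∀ b ∈ B, (∀ a ∈ A, m b a = 0) → b = 0 := by
    let C : Submodule F L :=
      { carrier := {b | b ∈ B ∧ ∀ a ∈ A, m b a = 0}
        add_mem' := fun {x y} hx hy => ⟨add_mem hx.1 hy.1, fun a ha => by
          simp [hx.2 a ha, hy.2 a ha]⟩
        zero_mem' := ⟨zero_mem _, by simp⟩
        smul_mem' := fun c x hx => ⟨smul_mem _ _ hx.1, fun a ha => by simp [hx.2 a ha]⟩ }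
    have hCid : IsIdeal m C := by
      intro l c hc
      obtain ⟨a, ha, b, hb, rfl⟩ := hdec l
      have h1 : m c a = 0 := hc.2 a ha
      have h2 : m a c = 0 := hright a ha c h1
      simp only [map_add, LinearMap.add_apply, h1, h2, zero_add]
      refine ⟨⟨hB _ hb _ hc.1, fun d hd => ?_⟩, ⟨hB _ hc.1 _ hb, fun d hd => ?_⟩⟩
      · have := hm b c d
        rw [hc.2 d hd, hc.2 _ (hA.1 b d hd).1] at this
        simpa using this.symm
      · have := hm c b d
        rw [hc.2 d hd, hc.2 _ (hA.1 b d hd).1] at this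
        simpa using this.symm
    have hC : C = ⊥ := by
      by_contra h
      obtain ⟨A', hA', hle⟩ := exists_min hCid h
      rw [huniq A' hA'] at hle
      apply hA.2.1
      rw [eq_bot_iff, ← hi]
      exact le_inf le_rfl fun x hx => (hle hx).1
    intro b hb h
    have : b ∈ C := ⟨hb, h⟩
    rw [hC] at this; simpa using this
  have halt : ∀ b ∈ B, m b b = 0 := fun b hb => hfaith _ (hB _ hb _ hb) fun a _ => by
    simpa using hm b b a
  refine ⟨A, B, ⟨hA, hab, ?_, hB, hi, hs, hfaith, halt, ?_, ?_⟩, hproper B hB hBt, huniq, ?_⟩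
  · have h1 := hne1 A hA
    have h2 : Module.finrank F A ≠ 0 := fun h => hA.2.1 (Submodule.finrank_eq_zero.1 h)
    omega
  · intro V hVA hV
    refine hA.2.2 V ?_ hVA
    intro l v hv
    obtain ⟨a, ha, b, hb, rfl⟩ := hdec l
    have h1 : m (a + b) v ∈ V := by
      simp only [map_add, LinearMap.add_apply, hab a ha v (hVA hv), zero_add]
      exact hV b hb v hv
    refine ⟨h1, ?_⟩
    rcases hlie0 with h | h
    · rw [h]; exact neg_mem h1
    · rw [h.2 v (hVA hv)]; exact zero_mem _
  · intro S hSB hS hne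
    refine hproper _ ?_ ?_
    · intro u hu w hw
      obtain ⟨a, ha, b, hb, rfl⟩ := mem_sup.1 hu
      obtain ⟨a', ha', b', hb', rfl⟩ := mem_sup.1 hw
      simp only [map_add, LinearMap.add_apply]
      have := mem_sup_left (T := S) (hA.1 a a' ha').1
      have := mem_sup_left (T := S) (hA.1 b a' ha').1
      have := mem_sup_left (T := S) (hA.1 b' a ha).2
      have := mem_sup_right (S := A) (hS b hb b' hb')
      exact add_mem (add_mem ‹_› ‹_›) (add_mem ‹_› ‹_›)
    · intro h
      apply hne
      refine le_antisymm hSB fun b hb => ?_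
      have hb' : b ∈ A ⊔ S := h ▸ mem_top
      obtain ⟨a, ha, s, hs', rfl⟩ := mem_sup.1 hb'
      have : a ∈ A ⊓ B := ⟨ha, by simpa using sub_mem hb (hSB hs')⟩
      rw [hi] at this
      have h0 : a = 0 := by simpa using this
      simpa [h0] using hs'
  · rcases hlie0 with h | h
    · exact Or.inl h
    · refine Or.inr ⟨le_antisymm h.1 (span_le.2 ?_), h.2⟩
      rintro _ ⟨x, rfl⟩
      obtain ⟨a, ha, b, hb, rfl⟩ := hdec x
      simp only [map_add, LinearMap.add_apply, halt b hb, h.2 a ha, zero_add, add_zero]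
      exact (hA.1 b a ha).1
end Leib

section Tri
variable {F : Type*} [Field F] {L : Type*} [AddCommGroup L] [Module F L] [FiniteDimensional F L]
variable {m : L →ₗ[F] L →ₗ[F] L} {A B : Submodule F L}

theorem subalg_span {s : Set L} (h : ∀ x ∈ s, ∀ y ∈ s, m x y ∈ span F s) :
    IsSubalg m (span F s) := by
  have : mprod m (span F s) (span F s) ≤ span F s := by
    rw [mprod, Submodule.map₂_span_span, span_le]
    rintro _ ⟨x, hx, y, hy, rfl⟩
    exact h x hx y hy
  exact fun x hx y hy => this (Submodule.apply_mem_map₂ _ hx hy)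

theorem Core.anti (h : Core m A B) : ∀ b ∈ B, ∀ c ∈ B, m b c = - m c b := by
  intro a ha b hb
  have := h.alt (a + b) (add_mem ha hb)
  simp only [map_add, LinearMap.add_apply, h.alt a ha, h.alt b hb, zero_add, add_zero] at this
  rw [add_comm] at this
  exact eq_neg_of_add_eq_zero_left this

theorem Core.line (h : Core m A B) {u : L} (hu : u ∈ A) (hu0 : u ≠ 0)
    (hb : ∀ b ∈ B, ∃ t : F, m b u = t • u) : False := by
  have key : ∀ b ∈ B, ∀ v ∈ span F {u}, m b v ∈ span F {u} := by
    intro b hbB v hv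
    obtain ⟨a, rfl⟩ := mem_span_singleton.1 hv
    obtain ⟨t, ht⟩ := hb b hbB
    rw [map_smul, ht]
    exact smul_mem _ _ (smul_mem _ _ (mem_span_singleton_self u))
  rcases h.irr (span F {u}) (by rwa [span_singleton_le_iff_mem]) key with h1 | h1
  · rw [span_singleton_eq_bot] at h1; exact hu0 h1
  · have := h.dim
    rw [← h1, finrank_span_singleton hu0] at this; omega

theorem Core.tri (hm : IsLeibniz m) (h : Core m A B) (hB : IsSupersolvable m B) :
    (∃ x, B = span F {x}) ∨
    (∃ x y, B = span F {x, y} ∧ m y x = x ∧ ∃ v ∈ A, v ≠ 0 ∧ ∃ κ : F, κ ≠ 0 ∧ m x v = κ • v) ∨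
    (∃ x y z, B = span F {x, y, z} ∧ m y x = z ∧ ∀ a ∈ A, m z a = a) := by
  classical
  obtain ⟨n, c, c0, cn, cmono, cid, cdim⟩ := hB
  cases n with
  | zero =>
    exfalso
    obtain ⟨u, hu, hu0⟩ := Submodule.exists_mem_ne_zero_of_ne_bot h.min.2.1
    refine h.line hu hu0 fun b hb => ⟨0, ?_⟩
    rw [← cn, c0] at hb
    have : b = 0 := by simpa using hb
    simp [this]
  | succ k =>
  have hkd : Module.finrank F B = Module.finrank F (c k) + 1 := by
    rw [← cn, cdim _ le_rfl, cdim _ (by omega)]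
  obtain ⟨x, hxB, hxN⟩ := exists_new hkd
  have hNB : c k ≤ B := (cid k (by omega)).1
  have hgen := step_gen hNB hkd hxB hxN
  have hNid := cid k (by omega)
  have hNsub : IsSubalg m (c k) := fun a ha b hb => (hNid.2 a (hNB ha) b hb).1
  have hNne : c k ≠ B := fun e => by rw [e] at hkd; omega
  obtain ⟨v, hvA, hv0, hv⟩ := eigen h.min.1 h.min.2.1 le_sup_left (h.ss _ hNB hNsub hNne)
  replace hv : ∀ s ∈ c k, ∃ t : F, m s v = t • v := fun s hs => hv s (mem_sup_right hs)
  have hNN : ∀ a ∈ c k, ∀ b ∈ c k, m (m a b) v = 0 := by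
    intro a ha b hb
    obtain ⟨s, hs⟩ := hv a ha
    obtain ⟨t, ht⟩ := hv b hb
    have := hm a b v
    rw [hs, ht, map_smul, map_smul, hs, ht, smul_smul, smul_smul, mul_comm] at this
    simpa using this
  have scal : ∀ E, IsIdealOf m B E → E ≤ c k → (∀ b ∈ E, m (m x b) v = 0) →
      ∀ b ∈ E, ∃ t : F, ∀ a ∈ A, m b a = t • a := by
    intro E hE hEN hx b hb
    let V : Submodule F L :=
      { carrier := {a | a ∈ A ∧ ∀ b ∈ E, ∀ t : F, m b v = t • v → m b a = t • a}
        add_mem' := fun {p q} hp hq => ⟨add_mem hp.1 hq.1, fun b hb t ht => by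
          rw [map_add, hp.2 b hb t ht, hq.2 b hb t ht, smul_add]⟩
        zero_mem' := ⟨zero_mem _, by simp⟩
        smul_mem' := fun c p hp => ⟨smul_mem _ _ hp.1, fun b hb t ht => by
          rw [map_smul, hp.2 b hb t ht, smul_comm]⟩ }
    have hV : V = A := by
      refine (h.irr V (fun a ha => ha.1) ?_).resolve_left ?_
      · intro g hg a ha
        refine ⟨(h.min.1 g a ha.1).1, fun b hb t ht => ?_⟩
        have h1 : m (m g b) v = (0 : F) • v := by
          obtain ⟨r, hr⟩ := hgen g hg
          have := hNN _ hr b (hEN hb)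
          rw [map_sub, map_smul, LinearMap.sub_apply, map_sub, LinearMap.smul_apply, map_smul,
            LinearMap.sub_apply, LinearMap.smul_apply, hx b hb, smul_zero, sub_zero] at this
          rw [this, zero_smul]
        have h2 := ha.2 _ (hE.2 g hg b hb).1 0 h1
        have h3 := hm g b a
        rw [h2, zero_smul, zero_add, ha.2 b hb t ht, map_smul] at h3
        exact h3.symm
      · intro h0
        have : v ∈ V := ⟨hvA, fun b hb t ht => ht⟩
        rw [h0] at this; exact hv0 (by simpa using this)
    obtain ⟨t, ht⟩ := hv b (hEN hb)
    refine ⟨t, fun a ha => ?_⟩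
    rw [← hV] at ha
    exact ha.2 b hb t ht
  by_cases hP : ∃ i, i ≤ k ∧ ∃ b ∈ c i, m (m x b) v ≠ 0
  swap
  · left
    push Not at hP
    have hs := scal (c k) hNid le_rfl (hP k le_rfl)
    refine ⟨x, ?_⟩
    by_contra hne
    have hle : span F {x} ≤ B := by rwa [span_singleton_le_iff_mem]
    have hsub : IsSubalg m (span F {x}) := subalg_span (by
      rintro _ rfl _ rfl
      rw [h.alt _ hxB]; exact zero_mem _)
    obtain ⟨u, huA, hu0, hu⟩ := eigen h.min.1 h.min.2.1 le_sup_left (h.ss _ hle hsub (Ne.symm hne))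
    refine h.line huA hu0 fun b hb => ?_
    obtain ⟨a, ha⟩ := hgen b hb
    obtain ⟨t, ht⟩ := hs _ ha
    obtain ⟨s, hs⟩ := hu x (mem_sup_right (mem_span_singleton_self x))
    refine ⟨t + a * s, ?_⟩
    have := ht u huA
    rw [map_sub, map_smul, LinearMap.sub_apply, LinearMap.smul_apply, hs, sub_eq_iff_eq_add] at this
    rw [this, add_smul, mul_smul]
  right
  obtain ⟨j, hjk, n0, hn0, hn0x, hmin⟩ : ∃ j, j + 1 ≤ k ∧ ∃ b ∈ c (j + 1), m (m x b) v ≠ 0 ∧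
      ∀ b ∈ c j, m (m x b) v = 0 := by
    have hsp := Nat.find_spec hP
    have hmn := fun i => Nat.find_min hP (m := i)
    generalize Nat.find hP = i at *
    obtain ⟨hik, b, hb, hbx⟩ := hsp
    cases i with
    | zero => rw [c0] at hb; exact absurd (by simp [(mem_bot F).1 hb]) hbx
    | succ j =>
      refine ⟨j, hik, b, hb, hbx, fun b hb => ?_⟩
      by_contra hne
      exact hmn j (by omega) ⟨by omega, b, hb, hne⟩
  have hmono' : ∀ d i, i + d ≤ k → c i ≤ c (i + d) := by
    intro d; induction d with
    | zero => intro i _; exact le_rfl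
    | succ d ih => intro i hi; exact (ih i (by omega)).trans (cmono (i + d) (by omega))
  have hmono : ∀ i, i ≤ k → c i ≤ c k := by
    intro i hi
    have := hmono' (k - i) i (by omega)
    rwa [show i + (k - i) = k by omega] at this
  have hEid := cid j (by omega)
  have hEN := hmono j (by omega)
  have hn0N : n0 ∈ c k := hmono _ hjk hn0
  have hn0B := hNB hn0N
  have hn0E : n0 ∉ c j := fun hh => hn0x (hmin _ hh)
  obtain ⟨μ, hr⟩ := step_gen (cmono j (by omega)) (by rw [cdim _ (by omega), cdim _ (by omega)])
    hn0 hn0E _ ((cid (j + 1) (by omega)).2 x hxB n0 hn0).1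
  obtain ⟨r, hrdef⟩ : ∃ r, r = m x n0 - μ • n0 := ⟨_, rfl⟩
  rw [← hrdef] at hr
  have hxn : m x n0 = μ • n0 + r := by rw [hrdef]; abel
  have hrB : r ∈ B := hEid.1 hr
  obtain ⟨κ, hκ⟩ := hv _ ((hNid.2 x hxB n0 hn0N).1)
  have hκ0 : κ ≠ 0 := fun hh => hn0x (by rw [hκ, hh, zero_smul])
  obtain ⟨t, ht⟩ := scal _ hEid hEN hmin r hr
  have hcen : ∀ b ∈ B, m b r = 0 := fun b hb => h.faith _ (h.sub _ hb _ hrB) fun a ha => by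
    have := hm b r a
    rw [ht a ha, ht _ (h.min.1 b a ha).1, map_smul] at this
    simpa using this
  have hcen' : ∀ b ∈ B, m r b = 0 := fun b hb => by rw [h.anti r hrB b hb, hcen b hb, neg_zero]
  have gen : ∀ S ≤ B, IsSubalg m S → ∀ n', x ∈ S → n' ∈ S → m x n' = m x n0 → B = S := by
    intro S hSB hS n' hx hn' he
    by_contra hne
    exact hv0 (nil_eig hm (h.ss S hSB hS (Ne.symm hne)) (mem_sup_right hx) (mem_sup_right hn')
      (mem_sup_left hvA) hκ0 (by rw [he, hκ]))
  by_cases hμ : μ = 0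
  · right
    rw [hμ, zero_smul, zero_add] at hxn
    have hκt : κ = t := by
      rw [hxn, ht v hvA] at hκ
      exact (smul_left_injective F hv0 hκ).symm
    rw [hκt] at hκ0
    refine ⟨n0, t⁻¹ • x, t⁻¹ • r, ?_, ?_, ?_⟩
    · have hmx : t⁻¹ • x ∈ span F {n0, t⁻¹ • x, t⁻¹ • r} := subset_span (by simp)
      have hmr : t⁻¹ • r ∈ span F {n0, t⁻¹ • x, t⁻¹ • r} := subset_span (by simp)
      have hxr : m n0 x = - r := by rw [h.anti _ hn0B _ hxB, hxn]
      refine gen _ (span_le.2 ?_) (subalg_span ?_) n0 ?_ (subset_span (by simp)) rfl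
      · rintro _ (rfl | rfl | rfl)
        · exact hn0B
        · exact smul_mem _ _ hxB
        · exact smul_mem _ _ hrB
      · rintro _ (rfl | rfl | rfl) _ (rfl | rfl | rfl) <;>
        simp only [map_smul, LinearMap.smul_apply, h.alt _ hn0B, h.alt _ hxB, h.alt _ hrB,
          hcen _ hxB, hcen' _ hxB, hcen _ hn0B, hcen' _ hn0B, hxn, hxr, smul_zero, zero_mem,
          smul_neg, neg_mem_iff, hmr]
      · exact (Submodule.smul_mem_iff _ (inv_ne_zero hκ0)).1 hmx
    · rw [map_smul, LinearMap.smul_apply, hxn]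
    · intro a ha
      rw [map_smul, LinearMap.smul_apply, ht a ha, inv_smul_smul₀ hκ0]
  · left
    have hX : m x (n0 + μ⁻¹ • r) = μ • (n0 + μ⁻¹ • r) := by
      rw [map_add, map_smul, hcen x hxB, smul_zero, add_zero, hxn, smul_add, smul_inv_smul₀ hμ]
    have hX0 : m x (n0 + μ⁻¹ • r) = m x n0 := by
      rw [map_add, map_smul, hcen x hxB, smul_zero, add_zero]
    have hXB : n0 + μ⁻¹ • r ∈ B := add_mem hn0B (smul_mem _ _ hrB)
    generalize n0 + μ⁻¹ • r = X at hX hX0 hXB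
    have hmX : X ∈ span F {X, μ⁻¹ • x} := subset_span (by simp)
    have hmx : μ⁻¹ • x ∈ span F {X, μ⁻¹ • x} := subset_span (by simp)
    have hX' : m X x = - (μ • X) := by rw [h.anti _ hXB _ hxB, hX]
    refine ⟨X, μ⁻¹ • x, ?_, ?_, v, hvA, hv0, μ⁻¹ * κ, ?_, ?_⟩
    · refine gen _ (span_le.2 ?_) (subalg_span ?_) X ?_ hmX hX0
      · rintro _ (rfl | rfl)
        · exact hXB
        · exact smul_mem _ _ hxB
      · rintro _ (rfl | rfl) _ (rfl | rfl)
        · rw [h.alt _ hXB]; exact zero_mem _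
        · rw [map_smul, hX']; exact smul_mem _ _ (neg_mem (smul_mem _ _ hmX))
        · rw [map_smul, LinearMap.smul_apply, hX]; exact smul_mem _ _ (smul_mem _ _ hmX)
        · rw [h.alt _ (smul_mem _ _ hxB)]; exact zero_mem _
      · exact (Submodule.smul_mem_iff _ (inv_ne_zero hμ)).1 hmx
    · rw [map_smul, LinearMap.smul_apply, hX, inv_smul_smul₀ hμ]
    · exact mul_ne_zero (inv_ne_zero hμ) hκ0
    · have : m (μ • X) v = κ • v := by rw [← hX, hX0, hκ]
      rw [map_smul, LinearMap.smul_apply] at this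
      rw [mul_smul, ← this, inv_smul_smul₀ hμ]

/-- In the non-abelian case every element of `B` has an eigenvector in `A`. -/
theorem Core.eig (h : Core m A B) {p q : L} (hp : p ∈ B) (hq : q ∈ B) (hpq : m p q ≠ 0) :
    ∀ b ∈ B, ∃ v ∈ A, v ≠ 0 ∧ ∃ t : F, m b v = t • v := by
  intro b hb
  have hne : span F {b} ≠ B := by
    intro he
    rw [← he] at hp hq
    obtain ⟨s, rfl⟩ := mem_span_singleton.1 hp
    obtain ⟨t, rfl⟩ := mem_span_singleton.1 hq
    simp [h.alt b hb] at hpq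
  have hsub : IsSubalg m (span F {b}) := subalg_span (by
    rintro _ rfl _ rfl
    rw [h.alt _ hb]; exact zero_mem _)
  obtain ⟨u, huA, hu0, hu⟩ := eigen h.min.1 h.min.2.1 le_sup_left
    (h.ss _ (by rwa [span_singleton_le_iff_mem]) hsub hne)
  exact ⟨u, huA, hu0, hu b (mem_sup_right (mem_span_singleton_self b))⟩

theorem not_strong {s t v : L} {κ : F} (hκ : κ ≠ 0) (hv : v ≠ 0) (h : m (m s t) v = κ • v) :
    ¬ IsStronglySolvable m (⊤ : Submodule F L) := by
  rintro ⟨k, hk⟩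
  have hst : m s t ∈ mprod m (⊤ : Submodule F L) ⊤ := Submodule.apply_mem_map₂ _ trivial trivial
  have hv' : m (m s t) (κ⁻¹ • v) = v := by rw [map_smul, h, inv_smul_smul₀ hκ]
  have : ∀ j, v ∈ lcSeries m (mprod m (⊤ : Submodule F L) ⊤) j := by
    intro j; induction j with
    | zero => rw [← hv']; exact Submodule.apply_mem_map₂ _ trivial trivial
    | succ j ih => rw [← hv']; exact Submodule.apply_mem_map₂ _ hst (smul_mem _ _ ih)
  have := this k
  rw [hk] at this; exact hv (by simpa using this)

/-- left action on an ideal -/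
def act (hA : IsIdeal m A) (b : L) : Module.End F A :=
  (m b).restrict (fun a ha => (hA b a ha).1)

theorem act_coe (hA : IsIdeal m A) (b : L) (a : A) : ((act hA b a : A) : L) = m b a := rfl

theorem Core.irr_act (h : Core m A B) {x y : L}
    (hB : ∀ b ∈ B, ∃ r s t : F, ∀ a ∈ A, m b a = r • m x a + s • m y a + t • a)
    (W : Submodule F A) (hX : ∀ a ∈ W, act h.min.1 x a ∈ W)
    (hY : ∀ a ∈ W, act h.min.1 y a ∈ W) : W = ⊥ ∨ W = ⊤ := by
  have key : ∀ b ∈ B, ∀ v ∈ W.map A.subtype, m b v ∈ W.map A.subtype := by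
    rintro b hb _ ⟨a, ha, rfl⟩
    obtain ⟨r, s, t, hh⟩ := hB b hb
    refine ⟨r • act h.min.1 x a + s • act h.min.1 y a + t • a,
      add_mem (add_mem (smul_mem _ _ (hX a ha)) (smul_mem _ _ (hY a ha))) (smul_mem _ _ ha), ?_⟩
    simp [hh a a.2, act_coe]
  rcases h.irr (W.map A.subtype) (Submodule.map_subtype_le A W) key with h1 | h1
  · left
    apply Submodule.map_injective_of_injective A.injective_subtype
    rw [h1, Submodule.map_bot]
  · right
    apply Submodule.map_injective_of_injective A.injective_subtype
    rw [h1, Submodule.map_subtype_top]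

theorem genBy_le {s : Set L} {S : Submodule F L} (hS : IsSubalg m S) (hs : s ⊆ S) :
    genBy m s ≤ S := sInf_le ⟨hS, hs⟩

theorem span_le_genBy (s : Set L) : span F s ≤ genBy m s :=
  span_le.2 fun _ hx => (Submodule.mem_sInf).2 fun _ hS => hS.2 hx

theorem span_coe_range {ι : Type*} {e : ι → A} (h : span F (Set.range e) = ⊤) :
    span F (Set.range fun i => (e i : L)) = A := by
  have := congrArg (Submodule.map A.subtype) h
  rw [Submodule.map_span, Submodule.map_subtype_top, ← Set.range_comp] at this
  exact this
end Tri

/-- Let `L` be a finite-dimensional solvable Leibniz algebra over `F`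
with `φ(L) = 0` which is minimally non-supersolvable. Then either
(1) `L` is strongly solvable and `L = A ∔ ⟨x⟩` with `A` the unique minimal ideal and
`dim A > 1`; or (2) `L` is not strongly solvable, `F` has characteristic `p > 0`, `L`
has a unique minimal ideal `A` with basis `{e₁, …, e_p}` (indexed here by `ZMod p`), and
either (a) `L = A + ⟨x,y⟩` with antisymmetric multiplication on `⟨x,y⟩`,
`x·eᵢ = e_{i+1}`, `y·eᵢ = (α+i)·eᵢ` (indices mod `p`), `y·x = x`, and every `a ∈ F` is
of the form `tᵖ − t`; or (b) `L = A + ⟨x,y,z⟩` with `x·eᵢ = e_{i+1}`,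
`y·eᵢ = (i+1)·e_{i−1}`, `z·eᵢ = eᵢ` (indices mod `p`), `y·x = z`, `x·z = y·z = 0`, and
`F` perfect when `p = 2`. Moreover, either `L` is a Lie algebra, or in the above
structure `A = Leib(L)` and `A·L = 0`. -/
theorem minimally_non_supersolvable_structure
    {F : Type*} [Field F] {L : Type*} [AddCommGroup L] [Module F L]
    [FiniteDimensional F L]
    (m : L →ₗ[F] L →ₗ[F] L) (hm : IsLeibniz m)
    (hsolv : IsSolvableAlg m)
    (hphi : frattiniIdeal m = ⊥)
    (hnotsuper : ¬ IsSupersolvable m (⊤ : Submodule F L))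
    (hproper : ∀ S : Submodule F L, IsSubalg m S → S ≠ ⊤ → IsSupersolvable m S) :
    (IsStronglySolvable m (⊤ : Submodule F L) ∧
      ∃ (A : Submodule F L) (x : L),
        IsMinIdeal m A ∧ (∀ A', IsMinIdeal m A' → A' = A) ∧
        1 < Module.finrank F A ∧
        A ⊓ genBy m {x} = ⊥ ∧ A ⊔ genBy m {x} = ⊤ ∧
        (IsLie m ∨ (A = leibIdeal m ∧ ∀ a ∈ A, ∀ u : L, m a u = 0))) ∨
    (¬ IsStronglySolvable m (⊤ : Submodule F L) ∧
      ∃ p : ℕ, p ≠ 0 ∧ CharP F p ∧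
      ∃ A : Submodule F L,
        IsMinIdeal m A ∧ (∀ A', IsMinIdeal m A' → A' = A) ∧
        ∃ e : ZMod p → L,
          (∀ i, e i ∈ A) ∧ LinearIndependent F e ∧
          Submodule.span F (Set.range e) = A ∧
          (((∃ (x y : L) (α : F),
              A ⊔ genBy m {x, y} = ⊤ ∧
              (∀ u ∈ genBy m {x, y}, ∀ v ∈ genBy m {x, y}, m u v = - m v u) ∧
              (∀ i : ZMod p, m x (e i) = e (i + 1)) ∧
              (∀ i : ZMod p, m y (e i) = (α + (i.val : F)) • e i) ∧
              m y x = x ∧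
              (∀ a : F, ∃ t : F, a = t ^ p - t)) ∨
            (∃ x y z : L,
              A ⊔ genBy m {x, y, z} = ⊤ ∧
              (∀ i : ZMod p, m x (e i) = e (i + 1)) ∧
              (∀ i : ZMod p, m y (e i) = ((i.val + 1 : ℕ) : F) • e (i - 1)) ∧
              (∀ i : ZMod p, m z (e i) = e i) ∧
              m y x = z ∧ m x z = 0 ∧ m y z = 0 ∧
              (p = 2 → ∀ a : F, ∃ b : F, b ^ p = a))) ∧
          (IsLie m ∨ (A = leibIdeal m ∧ ∀ a ∈ A, ∀ u : L, m a u = 0)))) := by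
  obtain ⟨A, B, h, hB, huniq, hlie⟩ := exists_core hm hsolv hphi hnotsuper hproper
  rcases h.tri hm hB with ⟨x, hx⟩ | ⟨x, y, hBs, hyx, v, hvA, hv0, κ, hκ, hxv⟩ | ⟨x, y, z, hBs, hyx, hz⟩
  · left
    have hxB : x ∈ B := by rw [hx]; exact mem_span_singleton_self x
    have hgen : genBy m {x} = B := le_antisymm (genBy_le h.sub (by simpa using hxB))
      (by conv_lhs => rw [hx]
          exact span_le_genBy _)
    refine ⟨⟨1, ?_⟩, A, x, h.min, huniq, h.dim, by rw [hgen, h.inf], by rw [hgen, h.sup], hlie⟩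
    have hLA : mprod m (⊤ : Submodule F L) ⊤ ≤ A := by
      refine Submodule.map₂_le.2 fun u _ w _ => ?_
      have hu : u ∈ A ⊔ B := h.sup ▸ mem_top
      have hw : w ∈ A ⊔ B := h.sup ▸ mem_top
      rw [hx] at hu hw
      obtain ⟨a, ha, b, hb, rfl⟩ := mem_sup.1 hu
      obtain ⟨a', ha', b', hb', rfl⟩ := mem_sup.1 hw
      obtain ⟨s, rfl⟩ := mem_span_singleton.1 hb
      obtain ⟨t, rfl⟩ := mem_span_singleton.1 hb'
      have h1 : m (s • x) (t • x) = 0 := by simp [h.alt x hxB]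
      rw [map_add, map_add, LinearMap.add_apply, LinearMap.add_apply, h1, add_zero]
      exact add_mem (add_mem (h.min.1 _ _ ha').1 (h.min.1 _ _ ha').1) (h.min.1 _ _ ha).2
    refine le_bot_iff.1 (Submodule.map₂_le.2 fun u hu w hw => ?_)
    rw [h.ab u (hLA hu) w (hLA hw)]; exact zero_mem _
  · right
    have hxB : x ∈ B := by rw [hBs]; exact subset_span (by simp)
    have hyB : y ∈ B := by rw [hBs]; exact subset_span (by simp)
    refine ⟨not_strong hκ hv0 (s := y) (t := x) (by rw [hyx, hxv]), ?_⟩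
    have hx0 : x ≠ 0 := by
      rintro rfl
      simp only [map_zero, LinearMap.zero_apply] at hxv
      exact (smul_ne_zero hκ hv0) hxv.symm
    have heig := h.eig hyB hxB (by rwa [hyx])
    obtain ⟨w, hwA, hw0, α, hyw⟩ := heig y hyB
    obtain ⟨X, hX⟩ : ∃ X, X = κ⁻¹ • x := ⟨_, rfl⟩
    have hxX : x = κ • X := by rw [hX, smul_inv_smul₀ hκ]
    have hXB : X ∈ B := hX ▸ smul_mem _ _ hxB
    have hyX : m y X = X := by rw [hX, map_smul, hyx]
    have hXv : m X v = v := by rw [hX, map_smul, LinearMap.smul_apply, hxv, inv_smul_smul₀ hκ]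
    obtain ⟨p, hp⟩ := CharP.exists F
    have hcomb : ∀ b ∈ B, ∃ r s : F, b = r • X + s • y := by
      intro b hb
      rw [hBs] at hb
      obtain ⟨r, s, rfl⟩ := mem_span_pair.1 hb
      exact ⟨r * κ, s, by rw [hxX, smul_smul]⟩
    obtain ⟨hp0, e, he, hsp, heX, heY⟩ := linA (p := p) (act h.min.1 X) (act h.min.1 y)
      (h.irr_act fun b hb => by
        obtain ⟨r, s, rfl⟩ := hcomb b hb
        exact ⟨r, s, 0, fun a _ => by simp⟩)
      (by
        ext a
        have := hm y X a
        rw [hyX] at this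
        simpa [act_coe, add_comm] using this)
      ⟨v, hvA⟩ (by simpa using hv0) (Subtype.ext hXv) ⟨w, hwA⟩ (by simpa using hw0) α
      (Subtype.ext hyw)
    refine ⟨p, hp0, hp, A, h.min, huniq, fun i => (e i : L), fun i => (e i).2,
      he.map' A.subtype A.ker_subtype, span_coe_range hsp, Or.inl ⟨X, y, α, ?_, ?_, ?_, ?_, hyX, ?_⟩, hlie⟩
    · rw [eq_top_iff, ← h.sup]
      refine sup_le_sup_left ?_ _
      intro b hb
      obtain ⟨r, s, rfl⟩ := hcomb b hb
      exact span_le_genBy _ (mem_span_pair.2 ⟨r, s, rfl⟩)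
    · have hle : genBy m {X, y} ≤ B := genBy_le h.sub (by
        rintro _ (rfl | rfl)
        · exact hXB
        · exact hyB)
      exact fun u hu w hw => h.anti u (hle hu) w (hle hw)
    · intro i; exact congrArg Subtype.val (heX i)
    · intro i; exact congrArg Subtype.val (heY i)
    · intro b
      have : Fact p.Prime := ⟨(CharP.char_is_prime_or_zero F p).resolve_right hp0⟩
      obtain ⟨u, huA, hu0, τ, hτ⟩ := heig (y + b • X) (add_mem hyB (smul_mem _ _ hXB))
      exact artin _ _ e he hsp α heX heY b ⟨u, huA⟩ (by simpa using hu0) τ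
        (Subtype.ext (by simpa [act_coe] using hτ))
  · right
    have hxB : x ∈ B := by rw [hBs]; exact subset_span (by simp)
    have hyB : y ∈ B := by rw [hBs]; exact subset_span (by simp)
    have hzB : z ∈ B := by rw [hBs]; exact subset_span (by simp)
    obtain ⟨u0, hu0A, hu00⟩ := Submodule.exists_mem_ne_zero_of_ne_bot h.min.2.1
    refine ⟨not_strong one_ne_zero hu00 (s := y) (t := x) (by rw [hyx, hz u0 hu0A, one_smul]), ?_⟩
    have hz0 : z ≠ 0 := by
      rintro rfl
      exact hu00 (by simpa using (hz u0 hu0A).symm)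
    have hcen : ∀ b ∈ B, m b z = 0 := fun b hb => h.faith _ (h.sub _ hb _ hzB) fun a ha => by
      have := hm b z a
      rw [hz a ha, hz _ (h.min.1 b a ha).1] at this
      simpa using this
    have hcen' : ∀ b ∈ B, m z b = 0 := fun b hb => by rw [h.anti z hzB b hb, hcen b hb, neg_zero]
    have heig := h.eig hyB hxB (by rwa [hyx])
    obtain ⟨v, hvA, hv0, c, hxv⟩ := heig x hxB
    obtain ⟨w, hwA, hw0, d, hyw⟩ := heig y hyB
    obtain ⟨X, hX⟩ : ∃ X, X = x + (1 - c) • z := ⟨_, rfl⟩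
    obtain ⟨Y, hY⟩ : ∃ Y, Y = y - d • z := ⟨_, rfl⟩
    have hXB : X ∈ B := hX ▸ add_mem hxB (smul_mem _ _ hzB)
    have hYB : Y ∈ B := hY ▸ sub_mem hyB (smul_mem _ _ hzB)
    have hYX : m Y X = z := by
      rw [hX, map_add, map_smul, hcen Y hYB, hY, map_sub, LinearMap.sub_apply, hyx, map_smul,
        LinearMap.smul_apply, hcen' x hxB]
      simp
    have hXv : m X v = v := by
      rw [hX, map_add, LinearMap.add_apply, hxv, map_smul, LinearMap.smul_apply, hz v hvA,
        ← add_smul]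
      simp
    have hYw : m Y w = 0 := by
      rw [hY, map_sub, LinearMap.sub_apply, hyw, map_smul, LinearMap.smul_apply, hz w hwA, sub_self]
    have hcomb : ∀ b ∈ B, ∃ r s t : F, b = r • X + s • Y + t • z := by
      intro b hb
      rw [hBs] at hb
      obtain ⟨r, s, t, rfl⟩ := mem_span_triple.1 hb
      exact ⟨r, s, t - r * (1 - c) + s * d, by rw [hX, hY]; module⟩
    obtain ⟨p, hp⟩ := CharP.exists F
    obtain ⟨hp0, e, he, hsp, heX, heY⟩ := linB (p := p) (act h.min.1 X) (act h.min.1 Y)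
      (h.irr_act fun b hb => by
        obtain ⟨r, s, t, rfl⟩ := hcomb b hb
        exact ⟨r, s, t, fun a ha => by simp [hz a ha]⟩)
      (by
        ext a
        have := hm Y X a
        rw [hYX, hz a a.2] at this
        simpa [act_coe, add_comm] using this)
      ⟨v, hvA⟩ (by simpa using hv0) (Subtype.ext hXv) ⟨w, hwA⟩ (by simpa using hw0)
      (Subtype.ext hYw)
    refine ⟨p, hp0, hp, A, h.min, huniq, fun i => (e i : L), fun i => (e i).2,
      he.map' A.subtype A.ker_subtype, span_coe_range hsp,
      Or.inr ⟨X, Y, z, ?_, ?_, ?_, ?_, hYX, hcen X hXB, hcen Y hYB, ?_⟩, hlie⟩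
    · rw [eq_top_iff, ← h.sup]
      refine sup_le_sup_left ?_ _
      intro b hb
      obtain ⟨r, s, t, rfl⟩ := hcomb b hb
      exact span_le_genBy _ (mem_span_triple.2 ⟨r, s, t, rfl⟩)
    · intro i; exact congrArg Subtype.val (heX i)
    · intro i; exact congrArg Subtype.val (heY i)
    · intro i; exact hz _ (e i).2
    · rintro rfl a
      obtain ⟨u, huA, hu0, τ, hτ⟩ := heig (X + (a - 1) • Y) (add_mem hXB (smul_mem _ _ hYB))
      refine ⟨τ, ?_⟩
      rw [sq_root _ _ e he hsp heX heY (a - 1) ⟨u, huA⟩ (by simpa using hu0) τ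
        (Subtype.ext (by simpa [act_coe] using hτ))]
      ring
end

section
/- Let L be a finite-dimensional Leibniz algebra over a field F such that every two-generated proper subalgebra of L is supersolvable, L itself is not supersolvable, and φ(L) = 0. Then every proper subalgebra of L is supersolvable, i.e. L is minimally non-supersolvable. -/
/-!
Basic theory of (left) Leibniz algebras, formalized over an arbitrary field `F`.
A Leibniz algebra structure on an `F`-vector space `L` is given by a bilinear
multiplication `m : L →ₗ[F] L →ₗ[F] L` satisfying the left Leibniz identity.
-/

open Submodule Module

namespace LeibAux

universe u v w

section Ends

variable {F : Type u} [Field F] {V : Type v} [AddCommGroup V] [Module F V]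

/-- Key step: an ideal of dimension one over scalars consists of scalars. -/
theorem scalar_step (Q : Submodule F (Module.End F V))
    (hirr : ∀ X : Submodule F V, (∀ q ∈ Q, ∀ v ∈ X, q v ∈ X) → X = ⊥ ∨ X = ⊤)
    (heig : ∀ q ∈ Q, ∃ ν : F, ∃ v : V, v ≠ 0 ∧ q v = ν • v)
    (h2 : ∀ b ∈ Q, ∀ a ∈ Q, ∀ α l : F, α ≠ l → ∀ v : V, b v = l • v →
      b * (b * a - a * b - α • a) - (b * a - a * b - α • a) * b
        - α • (b * a - a * b - α • a) = 0 → ∃ n : ℕ, ((b * a - a * b) ^ n) v = 0)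
    (I : Submodule F (Module.End F V)) (hIQ : I ≤ Q)
    (hI : ∀ x ∈ I, ∃ ν : F, x = ν • (1 : Module.End F V))
    (d : Module.End F V) (hdQ : d ∈ Q)
    (hd : ∀ q ∈ Q, ∃ z ∈ I, ∃ t : F, q * d - d * q = t • d + z) :
    ∃ ν : F, d = ν • (1 : Module.End F V) := by
  by_contra hns
  obtain ⟨ν, v0, hv0, hdv0⟩ := heig d hdQ
  by_cases hI1 : ∃ q ∈ Q, ∃ s : F, s ≠ 0 ∧ s • (1 : Module.End F V) ∈ I ∧
      q * d - d * q = s • (1 : Module.End F V)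
  · obtain ⟨q, hq, s, hs, hsI, hqd⟩ := hI1
    have h1 : (1 : Module.End F V) ∈ Q := by
      have := Q.smul_mem s⁻¹ (hIQ hsI)
      rwa [smul_smul, inv_mul_cancel₀ hs, one_smul] at this
    have hb : d + (1 - ν) • (1 : Module.End F V) ∈ Q := Q.add_mem hdQ (Q.smul_mem _ h1)
    have hc : (d + (1 - ν) • (1 : Module.End F V)) * q -
        q * (d + (1 - ν) • (1 : Module.End F V)) = -(s • (1 : Module.End F V)) := by
      rw [← hqd]; simp only [add_mul, mul_add, smul_mul_assoc, mul_smul_comm, one_mul, mul_one]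
      abel
    obtain ⟨n, hn⟩ := h2 _ hb q hq 0 1 zero_ne_one v0
      (by simp [hdv0, sub_smul]) (by rw [hc]; simp)
    rw [hc, ← neg_smul, smul_pow, one_pow] at hn
    simp only [LinearMap.smul_apply, Module.End.one_apply] at hn
    rcases smul_eq_zero.1 hn with h | h
    · exact pow_ne_zero n (neg_ne_zero.2 hs) h
    · exact hv0 h
  · push Not at hI1
    -- every commutator that is scalar vanishes
    have hker : ∀ e : Module.End F V, (∀ q ∈ Q, ∃ t : F, q * e - e * q = t • e) →
        (∀ v, e v = 0 → v = 0) ∨ e = 0 := by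
      intro e he
      rcases hirr (LinearMap.ker e) (by
        intro q hq v hv
        obtain ⟨t, ht⟩ := he q hq
        have := congrArg (fun f : Module.End F V => f v) ht
        rw [LinearMap.mem_ker] at hv ⊢
        simp [hv] at this
        exact this) with h | h
      · left; intro v hv
        have : v ∈ LinearMap.ker e := hv
        rwa [h, Submodule.mem_bot] at this
      · right; exact LinearMap.ker_eq_top.1 h
    by_cases hx : ∃ q ∈ Q, ∃ z ∈ I, ∃ t : F, t ≠ 0 ∧ q * d - d * q = t • d + z
    · obtain ⟨q1, hq1, z1, hz1, t1, ht1, hq1d⟩ := hx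
      obtain ⟨σ, hσ⟩ := hI _ (I.smul_mem t1⁻¹ hz1)
      have hσI : σ • (1 : Module.End F V) ∈ I := hσ ▸ I.smul_mem t1⁻¹ hz1
      set q0 := t1⁻¹ • q1 with hq0def
      have hq0 : q0 ∈ Q := Q.smul_mem _ hq1
      have hq0d : q0 * d - d * q0 = d + σ • (1 : Module.End F V) := by
        rw [← hσ, hq0def, smul_mul_assoc, mul_smul_comm, ← smul_sub, hq1d, smul_add, smul_smul,
          inv_mul_cancel₀ ht1, one_smul]
      set e := d + σ • (1 : Module.End F V) with he
      have heQ : e ∈ Q := Q.add_mem hdQ (hIQ hσI)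
      have hq0e : q0 * e - e * q0 = e := by
        refine Eq.trans ?_ hq0d
        rw [he]
        simp only [add_mul, mul_add, smul_mul_assoc, mul_smul_comm, one_mul, mul_one]
        rw [add_sub_add_right_eq_sub]
      have hqe : ∀ q ∈ Q, ∃ t : F, q * e - e * q = t • e := by
        intro q hq
        obtain ⟨z, hz, t, ht⟩ := hd q hq
        obtain ⟨ζ, hζ⟩ := hI z hz
        refine ⟨t, ?_⟩
        have h3 : (q - t • q0) * d - d * (q - t • q0) = (ζ - t * σ) • (1 : Module.End F V) := by
          have : (q - t • q0) * d - d * (q - t • q0) = (q * d - d * q) - t • (q0 * d - d * q0) := by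
            simp only [sub_mul, mul_sub, smul_mul_assoc, mul_smul_comm, smul_sub]; abel
          rw [this, ht, hq0d, hζ, sub_smul, smul_add, mul_smul]; abel
        have h4 : ζ - t * σ = 0 := by
          by_contra hne
          refine hI1 (q - t • q0) (Q.sub_mem hq (Q.smul_mem _ hq0)) _ hne ?_ h3
          rw [sub_smul, mul_smul, ← hζ]
          exact I.sub_mem hz (I.smul_mem _ hσI)
        have h5 : q * e - e * q = q * d - d * q := by
          rw [he]
          simp only [add_mul, mul_add, smul_mul_assoc, mul_smul_comm, one_mul, mul_one]
          rw [add_sub_add_right_eq_sub]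
        rw [h5, ht, hζ, sub_eq_zero.1 h4, he, smul_add, mul_smul]
      rcases hker e hqe with hinj | h0
      · obtain ⟨l, v, hv, hqv⟩ := heig q0 hq0
        have hev : q0 (e v) = (l + 1) • e v := by
          have := congrArg (fun f : Module.End F V => f v) hq0e
          simp [hqv] at this
          rw [add_smul, one_smul]; rw [sub_eq_iff_eq_add] at this; rw [this]; abel
        have key : ∀ l' : F, 1 ≠ l' → ∀ v' : V, v' ≠ 0 → q0 v' = l' • v' → False := by
          intro l' hl' v' hv' hqv'
          obtain ⟨n, hn⟩ := h2 q0 hq0 e heQ 1 l' hl' v' hqv' (by rw [hq0e]; simp)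
          rw [hq0e] at hn
          apply hv'
          clear hqv' hv'
          induction n with
          | zero => simpa using hn
          | succ n ih =>
            rw [pow_succ', Module.End.mul_apply] at hn
            exact ih (hinj _ hn)
        by_cases hl : (1 : F) = l
        · refine key (l + 1) ?_ (e v) (fun h => hv (hinj _ h)) hev
          rw [← hl]; intro h
          have : (1 : F) = 0 := by
            have h' : (1 : F) + 0 = 1 + 1 := by rw [add_zero]; exact h
            exact (add_left_cancel h').symm
          exact one_ne_zero this
        · exact key l hl v hv hqv
      · apply hns
        exact ⟨-σ, by rw [neg_smul]; exact eq_neg_of_add_eq_zero_left h0⟩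
    · push Not at hx
      have hcomm : ∀ q ∈ Q, q * d - d * q = 0 := by
        intro q hq
        obtain ⟨z, hz, t, ht⟩ := hd q hq
        by_cases h : t = 0
        · subst h
          obtain ⟨ζ, hζ⟩ := hI z hz
          rw [zero_smul, zero_add] at ht
          by_cases h' : ζ = 0
          · rw [ht, hζ, h', zero_smul]
          · exact absurd (ht.trans hζ) (hI1 q hq ζ h' (hζ ▸ hz))
        · exact absurd ht (hx q hq z hz t h)
      rcases hker (d - ν • (1 : Module.End F V)) (by
        intro q hq
        refine ⟨0, ?_⟩
        rw [zero_smul, ← hcomm q hq]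
        simp only [sub_mul, mul_sub, smul_mul_assoc, mul_smul_comm, one_mul, mul_one]
        abel) with h | h
      · exact hv0 (h v0 (by simp [hdv0]))
      · exact hns ⟨ν, sub_eq_zero.1 h⟩

/-- Lifting generalized eigenvectors modulo an invariant subspace. -/
theorem lift_geneig [FiniteDimensional F V] (h : Module.End F V) (K : Submodule F V)
    (hK : ∀ x ∈ K, h x ∈ K) (a : V) (k : ℕ) (ha : (h ^ k) a ∈ K) :
    ∃ c ∈ K, ∃ N : ℕ, (h ^ N) (a - c) = 0 := by
  have hanti : Antitone (fun n : ℕ => K.map (h ^ n)) := by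
    refine antitone_nat_of_succ_le ?_
    rintro n _ ⟨x, hx, rfl⟩
    exact ⟨h x, hK x hx, by rw [pow_succ, Module.End.mul_apply]⟩
  obtain ⟨n, hn⟩ := IsArtinian.monotone_stabilizes
    (⟨fun n => OrderDual.toDual (K.map (h ^ n)), hanti⟩ : ℕ →o (Submodule F V)ᵒᵈ)
  have h1 : K.map (h ^ n) = K.map (h ^ (n + k)) := hn (n + k) (by omega)
  have h3 : (h ^ (n + k)) a ∈ K.map (h ^ n) :=
    ⟨(h ^ k) a, ha, by rw [pow_add, Module.End.mul_apply]⟩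
  rw [h1] at h3
  obtain ⟨c, hc, hca⟩ := h3
  exact ⟨c, hc, n + k, by rw [map_sub, hca, sub_self]⟩

theorem sep_geneig (g : Module.End F V) (T : Submodule F V) (hT : ∀ x ∈ T, g x ∈ T)
    (α l : F) (hne : α ≠ l) (a y : V) (N₁ N₂ : ℕ)
    (ha : ((g - α • (1 : Module.End F V)) ^ N₁) a = 0)
    (hy : ((g - l • (1 : Module.End F V)) ^ N₂) y = 0) (h : a + y ∈ T) : a ∈ T ∧ y ∈ T := by
  have hpoly : ∀ (p : Polynomial F), ∀ x ∈ T, Polynomial.aeval g p x ∈ T := by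
    intro p x hx
    induction p using Polynomial.induction_on' with
    | add p q hp hq => rw [map_add]; exact T.add_mem hp hq
    | monomial n c =>
      rw [Polynomial.aeval_monomial, Module.algebraMap_end_eq_smul_id]
      rw [Module.End.mul_apply]
      have : ∀ n : ℕ, (g ^ n) x ∈ T := by
        intro n
        induction n with
        | zero => simpa using hx
        | succ n ih => rw [pow_succ', Module.End.mul_apply]; exact hT _ ih
      simpa using T.smul_mem c (this n)
  have hev : ∀ c : F, Polynomial.aeval g (Polynomial.X - Polynomial.C c) =
      g - c • (1 : Module.End F V) := by
    intro c
    simp [Module.algebraMap_end_eq_smul_id]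
    rfl
  have hcop : IsCoprime ((Polynomial.X - Polynomial.C α) ^ N₁)
      ((Polynomial.X - Polynomial.C l) ^ N₂) :=
    IsCoprime.pow (Polynomial.isCoprime_X_sub_C_of_isUnit_sub (sub_ne_zero.2 hne).isUnit)
  obtain ⟨p, q, hpq⟩ := hcop
  have hya : y ∈ T := by
    have h1 := hpoly (p * (Polynomial.X - Polynomial.C α) ^ N₁) _ h
    have h2 := congrArg (fun r => Polynomial.aeval g r y) hpq
    simp only [map_add, map_mul, map_pow, hev, map_one, Module.End.mul_apply,
      LinearMap.add_apply, hy, ha, map_zero, zero_add, add_zero, Module.End.one_apply] at h1 h2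
    rwa [h2] at h1
  exact ⟨by simpa using T.sub_mem h hya, hya⟩

end Ends

section Chains

variable {F : Type u} [Field F] {L : Type v} [AddCommGroup L] [Module F L]
variable {L' : Type w} [AddCommGroup L'] [Module F L']

/-- Chains of ideals of `S` starting at `A`, each step adding at most one dimension. -/
inductive Chain (m : L →ₗ[F] L →ₗ[F] L) (S A : Submodule F L) : Submodule F L → Prop
  | base : Chain m S A A
  | step (I : Submodule F L) (d : L) : Chain m S A I → IsIdealOf m S (I ⊔ span F {d}) →
      Chain m S A (I ⊔ span F {d})

/-- Supersolvability expressed through `Chain`. -/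
def SS (m : L →ₗ[F] L →ₗ[F] L) (S : Submodule F L) : Prop := Chain m S ⊥ S

variable {m : L →ₗ[F] L →ₗ[F] L} {m' : L' →ₗ[F] L' →ₗ[F] L'}

theorem isIdealOf_bot (S : Submodule F L) : IsIdealOf m S ⊥ := by
  refine ⟨bot_le, fun x _ y hy => ?_⟩
  rw [Submodule.mem_bot] at hy
  subst hy
  simp

theorem Chain.isIdealOf {S A J : Submodule F L} (h : Chain m S A J) (hA : IsIdealOf m S A) :
    IsIdealOf m S J := by
  cases h with
  | base => exact hA
  | step I d _ h => exact h

theorem Chain.trans {S A B J : Submodule F L} (h : Chain m S A J) (h' : Chain m S B A) :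
    Chain m S B J := by
  induction h with
  | base => exact h'
  | step I d _ hd ih => exact Chain.step I d ih hd

theorem Chain.map (φ : L →ₗ[F] L') (hφ : ∀ x y, φ (m x y) = m' (φ x) (φ y))
    {S A J : Submodule F L} (h : Chain m S A J) :
    Chain m' (S.map φ) (A.map φ) (J.map φ) := by
  induction h with
  | base => exact Chain.base
  | step I d _ hd ih =>
    have e : (I ⊔ span F {d}).map φ = I.map φ ⊔ span F {φ d} := by
      rw [Submodule.map_sup, Submodule.map_span, Set.image_singleton]
    rw [e]
    refine Chain.step _ _ ih ?_
    rw [← e]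
    refine ⟨Submodule.map_mono hd.1, ?_⟩
    rintro _ ⟨x, hx, rfl⟩ _ ⟨y, hy, rfl⟩
    rw [← hφ, ← hφ]
    exact ⟨⟨_, (hd.2 x hx y hy).1, rfl⟩, ⟨_, (hd.2 x hx y hy).2, rfl⟩⟩

theorem Chain.pullback (φ : L →ₗ[F] L') (hφ : ∀ x y, φ (m x y) = m' (φ x) (φ y))
    (hinj : Function.Injective φ)
    {S : Submodule F L} {J : Submodule F L'} (h : Chain m' (S.map φ) ⊥ J) :
    ∃ J' : Submodule F L, J'.map φ = J ∧ Chain m S ⊥ J' := by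
  induction h with
  | base => exact ⟨⊥, Submodule.map_bot φ, Chain.base⟩
  | step I d _ hd ih =>
    obtain ⟨I', hI', hc⟩ := ih
    obtain ⟨d', hd', rfl⟩ := hd.1 (Submodule.mem_sup_right (Submodule.mem_span_singleton_self d))
    have e : (I' ⊔ span F {d'}).map φ = I ⊔ span F {φ d'} := by
      rw [Submodule.map_sup, Submodule.map_span, Set.image_singleton, hI']
    refine ⟨I' ⊔ span F {d'}, e, Chain.step _ _ hc ?_⟩
    rw [← e] at hd
    refine ⟨?_, ?_⟩
    · exact (Submodule.map_le_map_iff_of_injective hinj _ _).1 hd.1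
    · intro x hx y hy
      have := hd.2 (φ x) ⟨x, hx, rfl⟩ (φ y) ⟨y, hy, rfl⟩
      rw [← hφ, ← hφ] at this
      obtain ⟨⟨z, hz, hz'⟩, ⟨t, ht, ht'⟩⟩ := this
      exact ⟨hinj hz' ▸ hz, hinj ht' ▸ ht⟩

theorem SS.pullback (φ : L →ₗ[F] L') (hφ : ∀ x y, φ (m x y) = m' (φ x) (φ y))
    (hinj : Function.Injective φ) {S : Submodule F L} (h : SS m' (S.map φ)) : SS m S := by
  obtain ⟨J', hJ', hc⟩ := Chain.pullback φ hφ hinj h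
  rw [Submodule.map_injective_of_injective hinj hJ'] at hc
  exact hc

/-- Pull back along a surjective map. -/
theorem Chain.comap_surj (φ : L →ₗ[F] L') (hφ : ∀ x y, φ (m x y) = m' (φ x) (φ y))
    (hs : Function.Surjective φ)
    {A J : Submodule F L'} (h : Chain m' ⊤ A J) :
    Chain m ⊤ (A.comap φ) (J.comap φ) := by
  induction h with
  | base => exact Chain.base
  | step I d _ hd ih =>
    obtain ⟨d', rfl⟩ := hs d
    have e : (I ⊔ span F {φ d'}).comap φ = I.comap φ ⊔ span F {d'} := by
      apply le_antisymm
      · intro x hx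
        rw [Submodule.mem_comap, Submodule.mem_sup] at hx
        obtain ⟨y, hy, z, hz, hyz⟩ := hx
        obtain ⟨t, rfl⟩ := Submodule.mem_span_singleton.1 hz
        rw [Submodule.mem_sup]
        refine ⟨x - t • d', ?_, t • d', Submodule.smul_mem _ _ (mem_span_singleton_self _), by abel⟩
        rw [Submodule.mem_comap, map_sub, map_smul, ← hyz, add_sub_cancel_right]
        exact hy
      · refine sup_le (Submodule.comap_mono le_sup_left) ?_
        rw [Submodule.span_singleton_le_iff_mem, Submodule.mem_comap]
        exact Submodule.mem_sup_right (mem_span_singleton_self _)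
    rw [e]
    refine Chain.step _ _ ih ?_
    rw [← e]
    refine ⟨le_top, fun x _ y hy => ?_⟩
    have := hd.2 (φ x) trivial (φ y) hy
    rw [← hφ, ← hφ] at this
    exact this

theorem ss_of_isSupersolvable [FiniteDimensional F L] {S : Submodule F L}
    (h : IsSupersolvable m S) : SS m S := by
  obtain ⟨n, c, h0, hn, hle, hid, hfr⟩ := h
  have : ∀ i, i ≤ n → Chain m S ⊥ (c i) := by
    intro i
    induction i with
    | zero => intro _; rw [h0]; exact Chain.base
    | succ i ih =>
      intro hi
      have h1 := ih (by omega)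
      have hlt : c i < c (i + 1) := by
        refine lt_of_le_of_ne (hle i (by omega)) fun he => ?_
        have a1 := hfr i (by omega)
        have a2 := hfr (i + 1) hi
        rw [← he] at a2; omega
      obtain ⟨d, hd, hdn⟩ := SetLike.exists_of_lt hlt
      have hle' : c i ⊔ span F {d} ≤ c (i + 1) :=
        sup_le hlt.le ((Submodule.span_singleton_le_iff_mem _ _).2 hd)
      have hlt2 : c i < c i ⊔ span F {d} := by
        refine lt_of_le_of_ne le_sup_left fun he => hdn ?_
        rw [he]; exact Submodule.mem_sup_right (mem_span_singleton_self _)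
      have e : c i ⊔ span F {d} = c (i + 1) := by
        apply Submodule.eq_of_le_of_finrank_le hle'
        have := Submodule.finrank_lt_finrank_of_lt hlt2
        rw [hfr i (by omega)] at this
        rw [hfr (i + 1) hi]; omega
      rw [← e]
      refine Chain.step _ _ h1 ?_
      rw [e]; exact hid _ hi
  have := this n le_rfl
  rwa [hn] at this

theorem isSupersolvable_of_ss [FiniteDimensional F L] {S : Submodule F L}
    (h : SS m S) : IsSupersolvable m S := by
  have key : ∀ J, Chain m S ⊥ J → ∃ (n : ℕ) (c : ℕ → Submodule F L), c 0 = ⊥ ∧ c n = J ∧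
    (∀ i, i < n → c i ≤ c (i + 1)) ∧
    (∀ i, i ≤ n → IsIdealOf m S (c i)) ∧
    (∀ i, i ≤ n → Module.finrank F (c i) = i) := by
    intro J hJ
    induction hJ with
    | base =>
      refine ⟨0, fun _ => ⊥, rfl, rfl, fun i hi => by omega, fun i _ => isIdealOf_bot S, ?_⟩
      intro i hi
      have : i = 0 := by omega
      subst this; simp
    | step I d hI hd ih =>
      obtain ⟨n, c, h0, hn, hle, hid, hfr⟩ := ih
      by_cases hdI : d ∈ I
      · refine ⟨n, c, h0, ?_, hle, hid, hfr⟩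
        rw [hn]; symm; apply sup_eq_left.2
        exact (Submodule.span_singleton_le_iff_mem _ _).2 hdI
      · have hlt2 : I < I ⊔ span F {d} := by
          refine lt_of_le_of_ne le_sup_left fun he => hdI ?_
          rw [he]; exact Submodule.mem_sup_right (mem_span_singleton_self _)
        have hf : Module.finrank F ↥(I ⊔ span F {d}) = n + 1 := by
          have a1 := Submodule.finrank_lt_finrank_of_lt hlt2
          have a2 := Submodule.finrank_add_le_finrank_add_finrank I (span F {d})
          have a3 := finrank_span_le_card (R := F) ({d} : Set L)
          have a4 := hfr n le_rfl
          rw [hn] at a4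
          simp at a3
          omega
        refine ⟨n + 1, fun j => if j ≤ n then c j else I ⊔ span F {d}, by simp [h0], by simp,
          ?_, ?_, ?_⟩
        · intro i hi
          by_cases h : i + 1 ≤ n
          · have h' : i ≤ n := by omega
            simpa [h, h'] using hle i (by omega)
          · have h' : i = n := by omega
            subst h'
            simp [hn]
        · intro i hi
          by_cases h : i ≤ n
          · simpa [h] using hid i h
          · simpa [h] using hd
        · intro i hi
          by_cases h : i ≤ n
          · have e : (if i ≤ n then c i else I ⊔ span F {d}) = c i := if_pos h
            show Module.finrank F ↥(if i ≤ n then c i else I ⊔ span F {d}) = i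
            rw [e]; exact hfr i h
          · have e : (if i ≤ n then c i else I ⊔ span F {d}) = I ⊔ span F {d} := if_neg h
            show Module.finrank F ↥(if i ≤ n then c i else I ⊔ span F {d}) = i
            rw [e, hf]; omega
  exact key S h

theorem genBy_isSubalg (s : Set L) : IsSubalg m (genBy m s) := by
  intro x hx y hy
  rw [genBy, Submodule.mem_sInf] at *
  intro S hS
  exact hS.1 x (hx S hS) y (hy S hS)

theorem subset_genBy (s : Set L) : s ⊆ genBy m s := by
  intro x hx
  rw [SetLike.mem_coe, genBy, Submodule.mem_sInf]
  exact fun S hS => hS.2 hx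

theorem genBy_le {s : Set L} {S : Submodule F L} (hS : IsSubalg m S) (h : s ⊆ S) :
    genBy m s ≤ S := sInf_le ⟨hS, h⟩

theorem map_genBy (φ : L →ₗ[F] L') (hφ : ∀ x y, φ (m x y) = m' (φ x) (φ y)) (s : Set L) :
    (genBy m s).map φ = genBy m' (φ '' s) := by
  apply le_antisymm
  · rw [Submodule.map_le_iff_le_comap]
    refine genBy_le ?_ ?_
    · intro x hx y hy
      rw [Submodule.mem_comap, hφ]
      exact genBy_isSubalg _ _ hx _ hy
    · intro x hx
      exact subset_genBy (m := m') (φ '' s) ⟨x, hx, rfl⟩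
  · refine genBy_le ?_ ?_
    · rintro _ ⟨x, hx, rfl⟩ _ ⟨y, hy, rfl⟩
      exact ⟨m x y, genBy_isSubalg s x hx y hy, hφ x y⟩
    · rintro _ ⟨x, hx, rfl⟩
      exact ⟨x, subset_genBy s hx, rfl⟩

/-- In a supersolvable subalgebra, products act nilpotently. -/
theorem nil_of_ss (hm : IsLeibniz m) {T : Submodule F L} (hT : SS m T) {a b : L}
    (ha : a ∈ T) (hb : b ∈ T) :
    ∃ n : ℕ, ∀ t ∈ T, ((m (m a b) : Module.End F L) ^ n) t = 0 := by
  have key : ∀ J, Chain m T ⊥ J → ∃ n : ℕ, ∀ t ∈ J, ((m (m a b) : Module.End F L) ^ n) t = 0 := by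
    intro J hJ
    induction hJ with
    | base => exact ⟨0, fun t ht => by simpa using ht⟩
    | step I d hI hd ih =>
      obtain ⟨n, hn⟩ := ih
      refine ⟨n + 1, fun t ht => ?_⟩
      have hIid := hI.isIdealOf (isIdealOf_bot T)
      rw [pow_succ, Module.End.mul_apply]
      apply hn
      have hab : ∀ i ∈ I, m (m a b) i ∈ I := by
        intro i hi
        have := hm a b i
        rw [← sub_eq_iff_eq_add] at this
        rw [← this]
        exact I.sub_mem (hIid.2 a ha _ (hIid.2 b hb i hi).1).1
          (hIid.2 b hb _ (hIid.2 a ha i hi).1).1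
      have hdJ : d ∈ I ⊔ span F {d} := Submodule.mem_sup_right (mem_span_singleton_self _)
      obtain ⟨i1, hi1, z1, hz1, e1⟩ := Submodule.mem_sup.1 (hd.2 a ha d hdJ).1
      obtain ⟨i2, hi2, z2, hz2, e2⟩ := Submodule.mem_sup.1 (hd.2 b hb d hdJ).1
      obtain ⟨α, rfl⟩ := Submodule.mem_span_singleton.1 hz1
      obtain ⟨β, rfl⟩ := Submodule.mem_span_singleton.1 hz2
      have hdd : m (m a b) d ∈ I := by
        have := hm a b d
        rw [← sub_eq_iff_eq_add] at this
        rw [← this, ← e1, ← e2]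
        simp only [map_add, map_smul]
        rw [← e1, ← e2]
        have : m a i2 + β • (i1 + α • d) - (m b i1 + α • (i2 + β • d)) =
          m a i2 + β • i1 - (m b i1 + α • i2) := by
          rw [smul_add, smul_add, smul_comm α β]; abel
        rw [this]
        exact I.sub_mem (I.add_mem (hIid.2 a ha _ hi2).1 (I.smul_mem _ hi1))
          (I.add_mem (hIid.2 b hb _ hi1).1 (I.smul_mem _ hi2))
      obtain ⟨i, hi, z, hz, e⟩ := Submodule.mem_sup.1 ht
      obtain ⟨s, rfl⟩ := Submodule.mem_span_singleton.1 hz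
      rw [← e, map_add, map_smul]
      exact I.add_mem (hab i hi) (I.smul_mem _ hdd)
  exact key T hT

/-- A perfect supersolvable subalgebra is zero. -/
theorem eq_bot_of_perfect (hm : IsLeibniz m) {S : Submodule F L} (hS : SS m S)
    (hp : S ≤ mprod m S S) : S = ⊥ := by
  have key : ∀ J, Chain m S ⊥ J → S ≤ J → S = ⊥ := by
    intro J hJ
    induction hJ with
    | base => exact fun h => le_bot_iff.1 h
    | step I d hI hd ih =>
      intro hSJ
      apply ih
      refine hp.trans ?_
      have hIid := hI.isIdealOf (isIdealOf_bot S)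
      have hdJ : d ∈ I ⊔ span F {d} := Submodule.mem_sup_right (mem_span_singleton_self _)
      have hdS := hd.1 hdJ
      have hdd : m d d ∈ I := by
        obtain ⟨i, hi, z, hz, e⟩ := Submodule.mem_sup.1 (hd.2 d hdS d hdJ).1
        obtain ⟨l, rfl⟩ := Submodule.mem_span_singleton.1 hz
        have h0 : m (m d d) d = 0 := by
          have := hm d d d
          simpa using this
        rw [← e, map_add, map_smul, LinearMap.add_apply, LinearMap.smul_apply, ← e] at h0
        by_cases hl : l = 0
        · rw [← e, hl, zero_smul, add_zero]; exact hi
        · have hdI : d ∈ I := by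
            have h1 : (l * l) • d = -(m i d + l • i) := by
              rw [smul_add, smul_smul] at h0
              rw [eq_neg_iff_add_eq_zero, ← h0]; abel
            have h2 : (l * l) • d ∈ I := by
              rw [h1]
              exact I.neg_mem (I.add_mem (hIid.2 d hdS i hi).2 (I.smul_mem _ hi))
            exact (Submodule.smul_mem_iff I (mul_ne_zero hl hl)).1 h2
          exact (hIid.2 d hdS d hdI).1
      rw [mprod, Submodule.map₂_le]
      intro x hx y hy
      obtain ⟨i, hi, z, hz, e⟩ := Submodule.mem_sup.1 (hSJ hx)
      obtain ⟨s, rfl⟩ := Submodule.mem_span_singleton.1 hz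
      obtain ⟨i', hi', z', hz', e'⟩ := Submodule.mem_sup.1 (hSJ hy)
      obtain ⟨s', rfl⟩ := Submodule.mem_span_singleton.1 hz'
      rw [← e, map_add, LinearMap.add_apply, map_smul, LinearMap.smul_apply]
      refine I.add_mem (hIid.2 _ hy _ hi).2 (I.smul_mem _ ?_)
      rw [← e', map_add, map_smul]
      exact I.add_mem (hIid.2 _ hdS _ hi').1 (I.smul_mem _ hdd)
  exact key S hS le_rfl

end Chains

section Action

variable {F : Type u} [Field F] {L : Type v} [AddCommGroup L] [Module F L]
variable {m : L →ₗ[F] L →ₗ[F] L}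

/-- Existence of eigenvectors on sections. -/
theorem exists_eig (hP : ∀ x y, SS m (genBy m {x, y})) {U W : Submodule F L} (hUW : U < W)
    (b : L) (hWb : ∀ w ∈ W, m b w ∈ W) :
    ∃ w ∈ W, w ∉ U ∧ ∃ l : F, m b w - l • w ∈ U := by
  obtain ⟨y, hyW, hyU⟩ := SetLike.exists_of_lt hUW
  have hb : b ∈ genBy m {b, y} := subset_genBy _ (by simp)
  have hy : y ∈ genBy m {b, y} := subset_genBy _ (by simp)
  have key : ∀ J, Chain m (genBy m {b, y}) ⊥ J → (∃ w ∈ J, w ∈ W ∧ w ∉ U) →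
      ∃ w ∈ W, w ∉ U ∧ ∃ l : F, m b w - l • w ∈ U := by
    intro J hJ
    induction hJ with
    | base =>
      rintro ⟨w, hw, _, hwU⟩
      rw [Submodule.mem_bot] at hw
      subst hw
      exact absurd U.zero_mem hwU
    | step I d hI hd ih =>
      rintro ⟨w, hw, hwW, hwU⟩
      by_cases hex : ∃ w ∈ I, w ∈ W ∧ w ∉ U
      · exact ih hex
      push Not at hex
      have h1 := (hd.2 b hb w hw).1
      obtain ⟨i, hi, z, hz, e⟩ := Submodule.mem_sup.1 hw
      obtain ⟨s, rfl⟩ := Submodule.mem_span_singleton.1 hz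
      obtain ⟨i', hi', z', hz', e'⟩ := Submodule.mem_sup.1 h1
      obtain ⟨s', rfl⟩ := Submodule.mem_span_singleton.1 hz'
      have hs : s ≠ 0 := by
        rintro rfl
        apply hwU
        rw [zero_smul, add_zero] at e
        subst e
        exact hex _ hi hwW
      refine ⟨w, hwW, hwU, s' * s⁻¹, ?_⟩
      apply hex
      · have : m b w - (s' * s⁻¹) • w = i' - (s' * s⁻¹) • i := by
          rw [← e', ← e, smul_add, smul_smul, mul_assoc, inv_mul_cancel₀ hs, mul_one]; abel
        rw [this]
        exact I.sub_mem hi' (I.smul_mem _ hi)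
      · exact W.sub_mem (hWb w hwW) (W.smul_mem _ hwW)
  exact key _ (hP b y) ⟨y, hy, hyW, hyU⟩

/-- The main two-generator trick. -/
theorem two_gen_trick [FiniteDimensional F L] (hm : IsLeibniz m)
    (hP : ∀ x y, SS m (genBy m {x, y}))
    {U W K : Submodule F L} (hUW : U ≤ W)
    {a b v : L} (hv : v ∈ W)
    (hWb : ∀ w ∈ W, m b w ∈ W) (hUb : ∀ w ∈ U, m b w ∈ U)
    (hWa : ∀ w ∈ W, m a w ∈ W) (hUa : ∀ w ∈ U, m a w ∈ U)
    (hK : ∀ x ∈ K, ∀ w ∈ W, m x w ∈ U) (hKb : ∀ x ∈ K, m b x ∈ K)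
    (α l : F) (hne : α ≠ l) (k : ℕ)
    (ha : (((m b : Module.End F L) - α • (1 : Module.End F L)) ^ k) a ∈ K)
    (hbv : m b v - l • v ∈ U) :
    ∃ n : ℕ, ((m (m b a) : Module.End F L) ^ n) v ∈ U := by
  obtain ⟨c, hc, N₁, hN₁⟩ := lift_geneig ((m b : Module.End F L) - α • (1 : Module.End F L)) K
    (by intro x hx; simpa using K.sub_mem (hKb x hx) (K.smul_mem α hx)) a k ha
  obtain ⟨u, hu, N₂, hN₂⟩ := lift_geneig ((m b : Module.End F L) - l • (1 : Module.End F L)) U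
    (by intro x hx; simpa using U.sub_mem (hUb x hx) (U.smul_mem l hx)) v 1 (by simpa using hbv)
  set T := genBy m {b, (a - c) + (v - u)} with hT
  have hTs : IsSubalg m T := genBy_isSubalg _
  have hbT : b ∈ T := subset_genBy _ (by simp)
  have hsT : (a - c) + (v - u) ∈ T := subset_genBy _ (by simp)
  obtain ⟨haT, hvT⟩ := sep_geneig (m b : Module.End F L) T (fun x hx => hTs b hbT x hx)
    α l hne (a - c) (v - u) N₁ N₂ hN₁ hN₂ hsT
  obtain ⟨n, hn⟩ := nil_of_ss hm (hP b ((a - c) + (v - u))) hbT haT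
  refine ⟨n, ?_⟩
  have hba : ∀ X : Submodule F L, (∀ w ∈ X, m b w ∈ X) → (∀ w ∈ X, m a w ∈ X) →
      ∀ w ∈ X, m (m b a) w ∈ X := by
    intro X h1 h2 w hw
    have := hm b a w
    rw [← sub_eq_iff_eq_add] at this
    rw [← this]
    exact X.sub_mem (h1 _ (h2 _ hw)) (h2 _ (h1 _ hw))
  have key : ∀ n : ℕ, ((m (m b a) : Module.End F L) ^ n) v ∈ W ∧
      ((m (m b a) : Module.End F L) ^ n) v - ((m (m b (a - c)) : Module.End F L) ^ n) (v - u)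
        ∈ U := by
    intro n
    induction n with
    | zero => simpa using ⟨hv, hu⟩
    | succ n ih =>
      obtain ⟨ih1, ih2⟩ := ih
      rw [pow_succ', pow_succ', Module.End.mul_apply, Module.End.mul_apply]
      set p := ((m (m b a) : Module.End F L) ^ n) v
      set q := ((m (m b (a - c)) : Module.End F L) ^ n) (v - u)
      refine ⟨hba W hWb hWa p ih1, ?_⟩
      have e : m (m b a) p - m (m b (a - c)) q =
          m (m b a) (p - q) + m (m b c) q := by
        simp only [map_sub, LinearMap.sub_apply]; abel
      have hq : q ∈ W := by
        have := W.sub_mem ih1 (hUW ih2)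
        rwa [sub_sub_cancel] at this
      rw [e]
      exact U.add_mem (hba U hUb hUa _ ih2) (hK _ (hKb c hc) q hq)
  have h1 := (key n).2
  rwa [hn _ hvT, sub_zero] at h1

/-- The action of `M` on the section `W / U`. -/
theorem exists_rho {M U W : Submodule F L}
    (hUM : ∀ x ∈ M, ∀ u ∈ U, m x u ∈ U) (hWM : ∀ x ∈ M, ∀ w ∈ W, m x w ∈ W) :
    ∃ ρ : M →ₗ[F] Module.End F (W ⧸ U.comap W.subtype), ∀ (x : M) (w : W),
      ρ x (Submodule.Quotient.mk w) = Submodule.Quotient.mk ⟨m x w, hWM x x.2 w w.2⟩ := by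
  have hcmp : ∀ x : M, U.comap W.subtype ≤
      (U.comap W.subtype).comap ((m (x : L)).restrict (hWM x x.2)) := by
    intro x w hw
    exact hUM x x.2 _ hw
  refine ⟨{ toFun := fun x => (U.comap W.subtype).mapQ (U.comap W.subtype)
              ((m (x : L)).restrict (hWM x x.2)) (hcmp x)
            map_add' := ?_
            map_smul' := ?_ }, ?_⟩
  · intro x y
    apply Submodule.linearMap_qext
    ext w
    simp only [LinearMap.comp_apply, Submodule.mkQ_apply, Submodule.mapQ_apply,
      LinearMap.add_apply]
    rw [← Submodule.Quotient.mk_add]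
    congr 1
    ext
    simp
  · intro t x
    apply Submodule.linearMap_qext
    ext w
    simp only [LinearMap.comp_apply, Submodule.mkQ_apply, Submodule.mapQ_apply,
      LinearMap.smul_apply, RingHom.id_apply]
    rw [← Submodule.Quotient.mk_smul]
    congr 1
    ext
    simp
  · intro x w
    rfl

theorem scalar_action [FiniteDimensional F L] (hm : IsLeibniz m)
    (hP : ∀ x y, SS m (genBy m {x, y})) {M U W A : Submodule F L} (hM : IsSubalg m M)
    (hUM : ∀ x ∈ M, ∀ u ∈ U, m x u ∈ U) (hWM : ∀ x ∈ M, ∀ w ∈ W, m x w ∈ W)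
    (hUW : U < W)
    (hirr : ∀ X : Submodule F L, U ≤ X → X ≤ W → (∀ x ∈ M, ∀ w ∈ X, m x w ∈ X) → X = U ∨ X = W)
    (hAid : IsIdealOf m M A) (hA : ∀ x ∈ A, ∀ w ∈ W, m x w ∈ U) (hc : Chain m M A M) :
    ∀ x ∈ M, ∃ ν : F, ∀ w ∈ W, m x w - ν • w ∈ U := by
  obtain ⟨ρ, hρ⟩ := exists_rho (m := m) hUM hWM
  set Q := LinearMap.range ρ with hQ
  have hcomm : ∀ x y : M, ρ ⟨m x y, hM x x.2 y y.2⟩ = ρ x * ρ y - ρ y * ρ x := by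
    intro x y
    apply Submodule.linearMap_qext
    ext w
    simp only [LinearMap.comp_apply, Submodule.mkQ_apply, Module.End.mul_apply,
      LinearMap.sub_apply, hρ]
    rw [← Submodule.Quotient.mk_sub]
    congr 1
    ext
    simp only [Submodule.coe_sub]
    rw [hm x y w]; abel
  have hmk : ∀ w : W, (Submodule.Quotient.mk w : W ⧸ U.comap W.subtype) = 0 ↔ (w : L) ∈ U := by
    intro w
    rw [Submodule.Quotient.mk_eq_zero]; rfl
  have hpow : ∀ (x : M) (n : ℕ) (w : W), ∃ h : ((m x : Module.End F L) ^ n) w ∈ W,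
      (ρ x ^ n) (Submodule.Quotient.mk w) =
        Submodule.Quotient.mk ⟨((m x : Module.End F L) ^ n) w, h⟩ := by
    intro x n w
    induction n with
    | zero => exact ⟨by simp, by simp⟩
    | succ n ih =>
      obtain ⟨h, e⟩ := ih
      rw [pow_succ', pow_succ', Module.End.mul_apply, Module.End.mul_apply, e, hρ]
      exact ⟨hWM x x.2 _ h, rfl⟩
  -- irreducibility
  have hirr' : ∀ X : Submodule F (W ⧸ U.comap W.subtype),
      (∀ q ∈ Q, ∀ v ∈ X, q v ∈ X) → X = ⊥ ∨ X = ⊤ := by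
    intro X hX
    set Y : Submodule F L := (X.comap (U.comap W.subtype).mkQ).map W.subtype with hY
    have hYmem : ∀ w : W, (w : L) ∈ Y ↔ Submodule.Quotient.mk w ∈ X := by
      intro w
      constructor
      · rintro ⟨w', hw', e⟩
        have : w' = w := Subtype.ext e
        subst this; exact hw'
      · intro h
        exact ⟨w, h, rfl⟩
    have hYW : Y ≤ W := by
      rintro _ ⟨w, _, rfl⟩; exact w.2
    have hUY : U ≤ Y := by
      intro u hu
      have := (hYmem ⟨u, hUW.le hu⟩).2 (by rw [(hmk _).2 hu]; exact X.zero_mem)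
      exact this
    have hMY : ∀ x ∈ M, ∀ w ∈ Y, m x w ∈ Y := by
      intro x hx w hw
      have hwW := hYW hw
      have h1 := (hYmem ⟨w, hwW⟩).1 hw
      have h2 := hX _ ⟨⟨x, hx⟩, rfl⟩ _ h1
      rw [hρ] at h2
      exact (hYmem _).2 h2
    rcases hirr Y hUY hYW hMY with h | h
    · left
      rw [eq_bot_iff]
      intro v hv
      obtain ⟨w, rfl⟩ := Submodule.Quotient.mk_surjective _ v
      rw [Submodule.mem_bot, hmk, ← h]
      exact (hYmem w).2 hv
    · right
      rw [eq_top_iff]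
      intro v _
      obtain ⟨w, rfl⟩ := Submodule.Quotient.mk_surjective _ v
      rw [← hYmem, h]; exact w.2
  have heig : ∀ q ∈ Q, ∃ ν : F, ∃ v, v ≠ 0 ∧ q v = ν • v := by
    rintro _ ⟨x, rfl⟩
    obtain ⟨w, hw, hwU, l, hl⟩ := exists_eig hP hUW (x : L) (hWM x x.2)
    refine ⟨l, Submodule.Quotient.mk ⟨w, hw⟩, fun h => hwU ((hmk _).1 h), ?_⟩
    rw [hρ, ← sub_eq_zero, ← Submodule.Quotient.mk_smul, ← Submodule.Quotient.mk_sub, hmk]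
    exact hl
  -- kernel
  set K : Submodule F L := (LinearMap.ker ρ).map M.subtype with hK
  have hKmem : ∀ x : M, (x : L) ∈ K ↔ ρ x = 0 := by
    intro w
    constructor
    · rintro ⟨w', hw', e⟩
      have : w' = w := Subtype.ext e
      subst this; exact hw'
    · intro h
      exact ⟨w, h, rfl⟩
  have hKact : ∀ x ∈ K, ∀ w ∈ W, m x w ∈ U := by
    rintro _ ⟨x, hx, rfl⟩ w hw
    have h1 := hρ x ⟨w, hw⟩
    have hx' : ρ x = 0 := hx
    rw [hx', LinearMap.zero_apply] at h1
    exact (hmk _).1 h1.symm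
  have h2 : ∀ b ∈ Q, ∀ a ∈ Q, ∀ α l : F, α ≠ l → ∀ v, b v = l • v →
      b * (b * a - a * b - α • a) - (b * a - a * b - α • a) * b
        - α • (b * a - a * b - α • a) = 0 → ∃ n : ℕ, ((b * a - a * b) ^ n) v = 0 := by
    rintro _ ⟨b, rfl⟩ _ ⟨a, rfl⟩ α l hne v hbv h0
    obtain ⟨⟨w, hw⟩, rfl⟩ := Submodule.Quotient.mk_surjective _ v
    rw [hρ, ← sub_eq_zero, ← Submodule.Quotient.mk_smul, ← Submodule.Quotient.mk_sub, hmk] at hbv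
    obtain ⟨n, hn⟩ := two_gen_trick (U := U) (W := W) (K := K) hm hP hUW.le (a := (a : L))
      (b := (b : L)) (v := w) hw (hWM b b.2) (hUM b b.2) (hWM a a.2) (hUM a a.2) hKact
      (by
        rintro _ ⟨x, hx, rfl⟩
        have hx' : ρ x = 0 := hx
        refine (hKmem ⟨m b x, hM b b.2 x x.2⟩).2 ?_
        rw [hcomm, hx']; simp) α l hne 2
      (by
        have e : (((m b : Module.End F L) - α • (1 : Module.End F L)) ^ 2) (a : L) =
            ((⟨m b (⟨m b a, hM b b.2 a a.2⟩ - α • a : M), hM b b.2 _ (Subtype.prop _)⟩ -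
              α • (⟨m b a, hM b b.2 a a.2⟩ - α • a) : M) : L) := by
          rw [pow_two, Module.End.mul_apply]
          simp
        rw [e, hKmem, map_sub, hcomm]
        simp only [map_sub, map_smul, hcomm]
        exact h0) hbv
    refine ⟨n, ?_⟩
    rw [← hcomm]
    obtain ⟨h, e⟩ := hpow ⟨m b a, hM b b.2 a a.2⟩ n ⟨w, hw⟩
    rw [e, hmk]
    exact hn
  have key : ∀ J, Chain m M A J → ∀ (x : L) (hx : x ∈ M), x ∈ J →
      ∃ ν : F, ρ ⟨x, hx⟩ = ν • (1 : Module.End F _) := by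
    intro J hJ
    induction hJ with
    | base =>
      intro x hx hxA
      refine ⟨0, ?_⟩
      rw [zero_smul]
      apply Submodule.linearMap_qext
      ext w
      simp only [LinearMap.comp_apply, Submodule.mkQ_apply, hρ, LinearMap.zero_apply]
      rw [hmk]
      exact hA x hxA w w.2
    | step I d hI hd ih =>
      have hIid := hI.isIdealOf hAid
      have hdJ : d ∈ I ⊔ span F {d} := Submodule.mem_sup_right (mem_span_singleton_self _)
      have hdM := hd.1 hdJ
      obtain ⟨ν, hν⟩ := scalar_step Q hirr' heig h2 ((I.comap M.subtype).map ρ)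
        (by rintro _ ⟨x, _, rfl⟩; exact ⟨x, rfl⟩)
        (by rintro _ ⟨x, hx, rfl⟩; exact ih x x.2 hx)
        (ρ ⟨d, hdM⟩) ⟨_, rfl⟩
        (by
          rintro _ ⟨q, rfl⟩
          obtain ⟨i, hi, z, hz, e⟩ := Submodule.mem_sup.1 (hd.2 q q.2 d hdJ).1
          obtain ⟨t, rfl⟩ := Submodule.mem_span_singleton.1 hz
          refine ⟨ρ ⟨i, hIid.1 hi⟩, ⟨_, hi, rfl⟩, t, ?_⟩
          have hh := hcomm q ⟨d, hdM⟩
          rw [← hh, ← map_smul, ← map_add]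
          congr 1
          ext
          simp only [Submodule.coe_add, Submodule.coe_smul]
          rw [← e, add_comm])
      intro x hx hxJ
      obtain ⟨i, hi, z, hz, e⟩ := Submodule.mem_sup.1 hxJ
      obtain ⟨t, rfl⟩ := Submodule.mem_span_singleton.1 hz
      obtain ⟨μ, hμ⟩ := ih i (hIid.1 hi) hi
      refine ⟨μ + t * ν, ?_⟩
      have : (⟨x, hx⟩ : M) = ⟨i, hIid.1 hi⟩ + t • ⟨d, hdM⟩ := by
        ext; simp [e]
      rw [this, map_add, map_smul, hμ, hν, add_smul, mul_smul]
  intro x hx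
  obtain ⟨ν, hν⟩ := key M hc x hx hx
  refine ⟨ν, fun w hw => ?_⟩
  have := hρ ⟨x, hx⟩ ⟨w, hw⟩
  rw [hν, LinearMap.smul_apply, Module.End.one_apply, eq_comm, ← sub_eq_zero,
    ← Submodule.Quotient.mk_smul, ← Submodule.Quotient.mk_sub, hmk] at this
  exact this

/-- Existence of common eigenvectors on sections. -/
theorem common_eig [FiniteDimensional F L] (hm : IsLeibniz m)
    (hP : ∀ x y, SS m (genBy m {x, y})) {M U W A : Submodule F L} (hM : IsSubalg m M)
    (hUM : ∀ x ∈ M, ∀ u ∈ U, m x u ∈ U) (hWM : ∀ x ∈ M, ∀ w ∈ W, m x w ∈ W)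
    (hUW : U < W)
    (hAid : IsIdealOf m M A) (hA : ∀ x ∈ A, ∀ w ∈ W, m x w ∈ U) (hc : Chain m M A M) :
    ∃ w ∈ W, w ∉ U ∧ ∀ x ∈ M, ∃ ν : F, m x w - ν • w ∈ U := by
  obtain ⟨W', ⟨⟨h1, h2, h3⟩, hmin⟩⟩ := exists_minimal_of_wellFoundedLT
    (fun X : Submodule F L => U < X ∧ X ≤ W ∧ ∀ x ∈ M, ∀ w ∈ X, m x w ∈ X) ⟨W, hUW, le_rfl, hWM⟩
  have := scalar_action hm hP hM hUM h3 h1 (by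
    intro X hUX hXW hX
    rcases eq_or_lt_of_le hUX with h | h
    · exact Or.inl h.symm
    · exact Or.inr (le_antisymm hXW (hmin ⟨h, hXW.trans h2, hX⟩ hXW))) hAid
      (fun x hx w hw => hA x hx w (h2 hw)) hc
  obtain ⟨w, hw, hwU⟩ := SetLike.exists_of_lt h1
  refine ⟨w, h2 hw, hwU, fun x hx => ?_⟩
  obtain ⟨ν, hν⟩ := this x hx
  exact ⟨ν, hν w hw⟩

end Action

section Main

variable {F : Type u} [Field F]

/-- The induced multiplication on a quotient by an ideal. -/
theorem exists_quot {L : Type v} [AddCommGroup L] [Module F L] {m : L →ₗ[F] L →ₗ[F] L}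
    {I : Submodule F L} (hI : IsIdeal m I) :
    ∃ m' : (L ⧸ I) →ₗ[F] (L ⧸ I) →ₗ[F] (L ⧸ I), ∀ x y, I.mkQ (m x y) = m' (I.mkQ x) (I.mkQ y) := by
  have h1 : ∀ x, m x ∈ Submodule.compatibleMaps I I := fun x y hy => (hI x y hy).1
  refine ⟨I.liftQ ((Submodule.mapQLinear I I).comp
    (m.codRestrict (Submodule.compatibleMaps I I) h1)) ?_, ?_⟩
  · intro x hx
    rw [LinearMap.mem_ker]
    apply Submodule.linearMap_qext
    ext y
    simp only [LinearMap.comp_apply, LinearMap.zero_apply]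
    exact (Submodule.Quotient.mk_eq_zero I).2 (hI y x hx).2
  · intro x y
    rfl

/-- The induced multiplication on a subalgebra. -/
theorem exists_sub {L : Type v} [AddCommGroup L] [Module F L] {m : L →ₗ[F] L →ₗ[F] L}
    {S : Submodule F L} (hS : IsSubalg m S) :
    ∃ m' : S →ₗ[F] S →ₗ[F] S, ∀ x y, S.subtype (m' x y) = m (S.subtype x) (S.subtype y) := by
  refine ⟨LinearMap.mk₂ F (fun x y => ⟨m x y, hS x x.2 y y.2⟩) ?_ ?_ ?_ ?_, ?_⟩
  · intro a b c; ext; simp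
  · intro a b c; ext; simp
  · intro a b c; ext; simp
  · intro a b c; ext; simp
  · intro x y; rfl

theorem mprod_isIdeal {L : Type v} [AddCommGroup L] [Module F L] {m : L →ₗ[F] L →ₗ[F] L}
    (hm : IsLeibniz m) {A : Submodule F L} (hA : IsIdeal m A) : IsIdeal m (mprod m A A) := by
  intro x y hy
  have h1 : mprod m A A ≤ (mprod m A A).comap (m x) := by
    rw [mprod, Submodule.map₂_le]
    intro a ha b hb
    rw [Submodule.mem_comap, hm x a b]
    exact Submodule.add_mem _ (Submodule.apply_mem_map₂ _ (hA x a ha).1 hb)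
      (Submodule.apply_mem_map₂ _ ha (hA x b hb).1)
  have h2 : mprod m A A ≤ (mprod m A A).comap (m.flip x) := by
    rw [mprod, Submodule.map₂_le]
    intro a ha b hb
    rw [Submodule.mem_comap, LinearMap.flip_apply]
    have := hm a b x
    rw [← sub_eq_iff_eq_add] at this
    rw [← this]
    exact Submodule.sub_mem _ (Submodule.apply_mem_map₂ _ ha (hA x b hb).2)
      (Submodule.apply_mem_map₂ _ hb (hA x a ha).2)
  exact ⟨h1 hy, h2 hy⟩

theorem swap_mul {L : Type v} [AddCommGroup L] [Module F L] {m : L →ₗ[F] L →ₗ[F] L}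
    (hm : IsLeibniz m) (a x y : L) : m (m a x + m x a) y = 0 := by
  rw [map_add, LinearMap.add_apply]
  have h1 := hm a x y
  have h2 := hm x a y
  rw [h2] at h1
  have h3 : m (m a x) y + m (m x a) y + m a (m x y) = 0 + m a (m x y) := by
    rw [zero_add, add_assoc]
    exact h1.symm
  exact add_right_cancel h3

/-- The symmetrized products of an ideal form an ideal. -/
theorem symm_isIdeal {L : Type v} [AddCommGroup L] [Module F L] {m : L →ₗ[F] L →ₗ[F] L}
    (hm : IsLeibniz m) {A : Submodule F L} (hA : IsIdeal m A) :
    ∃ B : Submodule F L, IsIdeal m B ∧ B ≤ A ∧ (∀ a ∈ A, ∀ x, m a x + m x a ∈ B) ∧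
      ∀ b ∈ B, ∀ x, m b x = 0 := by
  set B : Submodule F L := span F {z | ∃ a ∈ A, ∃ x, z = m a x + m x a} with hB
  have h0 : ∀ b ∈ B, ∀ x, m b x = 0 := by
    intro b hb x
    have : B ≤ LinearMap.ker (m.flip x) := by
      rw [hB, Submodule.span_le]
      rintro _ ⟨a, ha, y, rfl⟩
      exact swap_mul hm a y x
    exact this hb
  refine ⟨B, ?_, ?_, fun a ha x => subset_span ⟨a, ha, x, rfl⟩, h0⟩
  · intro x b hb
    refine ⟨?_, by rw [h0 b hb]; exact B.zero_mem⟩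
    have : B ≤ B.comap (m x) := by
      rw [hB, Submodule.span_le, ← hB]
      rintro _ ⟨a, ha, y, rfl⟩
      rw [SetLike.mem_coe, Submodule.mem_comap, map_add, hm x a y, hm x y a]
      have e : m (m x a) y + m a (m x y) + (m (m x y) a + m y (m x a)) =
        (m (m x a) y + m y (m x a)) + (m a (m x y) + m (m x y) a) := by abel
      rw [e]
      exact B.add_mem (subset_span ⟨_, (hA x a ha).1, y, rfl⟩) (subset_span ⟨_, ha, _, rfl⟩)
    exact this hb
  · rw [hB, Submodule.span_le]
    rintro _ ⟨a, ha, x, rfl⟩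
    exact A.add_mem (hA x a ha).2 (hA x a ha).1

/-- The codimension one argument. -/
theorem ss_of_codim_one {L : Type v} [AddCommGroup L] [Module F L] [FiniteDimensional F L]
    {m : L →ₗ[F] L →ₗ[F] L} (hm : IsLeibniz m) (hP : ∀ x y, SS m (genBy m {x, y}))
    (hanti : ∀ x y, m x y = - m y x) {M : Submodule F L} (hM : IsSubalg m M) (hMt : M ≠ ⊤)
    (hsimple : ∀ I : Submodule F L, IsIdeal m I → I = ⊥ ∨ I = ⊤) (w : L)
    (hMw : M ⊔ span F {w} = ⊤) : SS m (⊤ : Submodule F L) := by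
  set g : Module.End F L := m w with hg
  have hdec : ∀ x : L, ∃ y ∈ M, ∃ t : F, x = y + t • w := by
    intro x
    have hx : x ∈ M ⊔ span F {w} := hMw ▸ trivial
    obtain ⟨y, hy, z, hz, e⟩ := Submodule.mem_sup.1 hx
    obtain ⟨t, rfl⟩ := Submodule.mem_span_singleton.1 hz
    exact ⟨y, hy, t, e.symm⟩
  let R : ℕ → Submodule F L := fun k => ⨅ j : Fin k, M.comap (g ^ (j : ℕ))
  have hRmem : ∀ k a, a ∈ R k ↔ ∀ j, j < k → (g ^ j) a ∈ M := by
    intro k a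
    simp only [R, Submodule.mem_iInf, Submodule.mem_comap]
    exact ⟨fun h j hj => h ⟨j, hj⟩, fun h j => h j j.2⟩
  let I : Submodule F L := ⨅ j : ℕ, M.comap (g ^ j)
  have hImem : ∀ a, a ∈ I ↔ ∀ j, (g ^ j) a ∈ M := by
    intro a
    simp only [I, Submodule.mem_iInf, Submodule.mem_comap]
  have hgI : ∀ a ∈ I, g a ∈ I := by
    intro a ha
    rw [hImem] at ha ⊢
    intro j
    have := ha (j + 1)
    rwa [pow_succ, Module.End.mul_apply] at this
  have hMI : ∀ j, ∀ x ∈ M, ∀ a ∈ I, (g ^ j) (m x a) ∈ M := by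
    intro j
    induction j with
    | zero =>
      intro x hx a ha
      have := (hImem a).1 ha 0
      exact hM x hx a this
    | succ j ih =>
      intro x hx a ha
      rw [pow_succ, Module.End.mul_apply, hg, hm w x a]
      obtain ⟨y, hy, t, e⟩ := hdec (m w x)
      rw [e, map_add, map_add, LinearMap.add_apply, map_smul, LinearMap.smul_apply, map_add,
        map_smul]
      refine M.add_mem (M.add_mem (ih y hy a ha) (M.smul_mem _ ?_)) (ih x hx _ (hgI a ha))
      have := (hImem a).1 ha (j + 1)
      rwa [pow_succ, Module.End.mul_apply] at this
  have hIid : IsIdeal m I := by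
    intro x a ha
    have h1 : m x a ∈ I := by
      obtain ⟨y, hy, t, e⟩ := hdec x
      rw [e, map_add, LinearMap.add_apply, map_smul, LinearMap.smul_apply]
      exact I.add_mem ((hImem _).2 fun j => hMI j y hy a ha) (I.smul_mem _ (hgI a ha))
    exact ⟨h1, by rw [hanti]; exact I.neg_mem h1⟩
  have hIbot : I = ⊥ := by
    rcases hsimple I hIid with h | h
    · exact h
    · exfalso
      apply hMt
      rw [eq_top_iff, ← h]
      intro a ha
      simpa using (hImem a).1 ha 0
  have hanti' : Antitone R := by
    intro i j hij a ha
    rw [hRmem] at ha ⊢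
    exact fun k hk => ha k (by omega)
  obtain ⟨n, hn⟩ := IsArtinian.monotone_stabilizes
    (⟨fun n => OrderDual.toDual (R n), hanti'⟩ : ℕ →o (Submodule F L)ᵒᵈ)
  have hex : ∃ k, R k = ⊥ := by
    refine ⟨n, ?_⟩
    rw [eq_bot_iff, ← hIbot]
    intro a ha
    rw [hImem]
    intro j
    have h1 : R n = R (n + j + 1) := hn (n + j + 1) (by omega)
    rw [h1, hRmem] at ha
    exact ha j (by omega)
  classical
  obtain ⟨k, hk, hkmin⟩ : ∃ k, R k = ⊥ ∧ ∀ j, j < k → R j ≠ ⊥ :=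
    ⟨Nat.find hex, Nat.find_spec hex, fun j hj => Nat.find_min hex hj⟩
  have hR0 : R 0 = ⊤ := by
    rw [eq_top_iff]; intro a _
    rw [hRmem]; intro j hj; omega
  have hk0 : k ≠ 0 := by
    rintro rfl
    apply hMt
    rw [eq_top_iff, ← hR0, hk]; exact bot_le
  obtain ⟨k, rfl⟩ := Nat.exists_eq_succ_of_ne_zero hk0
  obtain ⟨z, hz, hz0⟩ := Submodule.exists_mem_ne_zero_of_ne_bot (hkmin k (by omega))
  rw [hRmem] at hz
  have hzM : (g ^ k) z ∉ M := by
    intro h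
    apply hz0
    rw [← Submodule.mem_bot F, ← hk, hRmem]
    intro j hj
    rcases Nat.lt_succ_iff_lt_or_eq.1 hj with h' | h'
    · exact hz j h'
    · rw [h']; exact h
  set T := genBy m {w, z} with hT
  have hwT : w ∈ T := subset_genBy _ (by simp)
  have hzT : z ∈ T := subset_genBy _ (by simp)
  have hpT : ∀ j, (g ^ j) z ∈ T := by
    intro j
    induction j with
    | zero => simpa using hzT
    | succ j ih =>
      rw [pow_succ', Module.End.mul_apply]
      exact genBy_isSubalg _ w hwT _ ih
  have hdown : ∀ i j, i + j = k + 1 → R i ≤ T := by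
    intro i j
    induction j generalizing i with
    | zero =>
      intro h
      have : i = k.succ := by omega
      rw [this, hk]; exact bot_le
    | succ j ih =>
      intro h a ha
      rw [hRmem] at ha
      have hij : (g ^ i) ((g ^ j) z) = (g ^ k) z := by
        rw [← Module.End.mul_apply, ← pow_add]
        have : i + j = k := by omega
        rw [this]
      obtain ⟨y1, hy1, t1, e1⟩ := hdec ((g ^ i) a)
      obtain ⟨y2, hy2, t2, e2⟩ := hdec ((g ^ k) z)
      have ht2 : t2 ≠ 0 := by
        rintro rfl
        apply hzM
        rw [e2, zero_smul, add_zero]; exact hy2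
      have hmem : a - (t1 * t2⁻¹) • (g ^ j) z ∈ R (i + 1) := by
        rw [hRmem]
        intro l hl
        rw [map_sub, map_smul]
        rcases Nat.lt_succ_iff_lt_or_eq.1 hl with h' | h'
        · refine M.sub_mem (ha l h') (M.smul_mem _ ?_)
          rw [← Module.End.mul_apply, ← pow_add]
          exact hz _ (by omega)
        · rw [h', hij, e1, e2, smul_add, smul_smul, mul_assoc, inv_mul_cancel₀ ht2, mul_one]
          have : y1 + t1 • w - ((t1 * t2⁻¹) • y2 + t1 • w) = y1 - (t1 * t2⁻¹) • y2 := by abel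
          rw [this]
          exact M.sub_mem hy1 (M.smul_mem _ hy2)
      have h3 := ih (i + 1) (by omega) hmem
      have := T.add_mem h3 (T.smul_mem (t1 * t2⁻¹) (hpT j))
      rwa [sub_add_cancel] at this
  have hTtop : T = ⊤ := by
    rw [eq_top_iff, ← hR0]
    exact hdown 0 (k + 1) (by omega)
  rw [← hTtop]
  exact hP w z

theorem ss_top : ∀ (n : ℕ) (L : Type v) [AddCommGroup L] [Module F L] [FiniteDimensional F L]
    (m : L →ₗ[F] L →ₗ[F] L), Module.finrank F L = n → IsLeibniz m →
    (∀ x y, SS m (genBy m {x, y})) → SS m (⊤ : Submodule F L) := by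
  intro n
  induction n using Nat.strong_induction_on with
  | _ n IH =>
  intro L _ _ _ m hn hm hP
  by_cases htriv : (⊤ : Submodule F L) = ⊥
  · rw [htriv]; exact Chain.base
  have hQuot : ∀ I : Submodule F L, IsIdeal m I → I ≠ ⊥ → Chain m ⊤ I ⊤ := by
    intro I hI hI0
    obtain ⟨m', hm'⟩ := exists_quot hI
    have hlt : Module.finrank F (L ⧸ I) < n := by
      have h1 := Submodule.finrank_quotient_add_finrank I
      have h2 : 0 < Module.finrank F I := by
        rw [Nat.pos_iff_ne_zero]
        intro h
        exact hI0 (Submodule.finrank_eq_zero.1 h)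
      omega
    have h := IH _ hlt (L ⧸ I) m' rfl (by
      intro a b c
      obtain ⟨a, rfl⟩ := I.mkQ_surjective a
      obtain ⟨b, rfl⟩ := I.mkQ_surjective b
      obtain ⟨c, rfl⟩ := I.mkQ_surjective c
      simp only [← hm']
      rw [hm a b c, map_add]) (by
      intro x y
      obtain ⟨x, rfl⟩ := I.mkQ_surjective x
      obtain ⟨y, rfl⟩ := I.mkQ_surjective y
      have e := map_genBy (m := m) (m' := m') I.mkQ hm' {x, y}
      rw [Set.image_pair] at e
      rw [← e]
      have := Chain.map (m' := m') I.mkQ hm' (hP x y)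
      rw [Submodule.map_bot] at this
      exact this)
    have := Chain.comap_surj (m := m) I.mkQ hm' I.mkQ_surjective h
    rwa [Submodule.comap_bot, Submodule.ker_mkQ, Submodule.comap_top] at this
  have hSub : ∀ S : Submodule F L, IsSubalg m S → S ≠ ⊤ → SS m S := by
    intro S hS hSt
    obtain ⟨m', hm'⟩ := exists_sub hS
    have hinj : Function.Injective S.subtype := S.injective_subtype
    have h := IH _ (hn ▸ Submodule.finrank_lt hSt) S m' rfl (by
      intro a b c
      apply hinj
      rw [map_add]
      simp only [hm']
      exact hm _ _ _) (by
      intro x y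
      apply SS.pullback (m' := m) S.subtype hm' hinj
      rw [map_genBy (m' := m) S.subtype hm', Set.image_pair]
      exact hP _ _)
    have := Chain.map (m' := m) S.subtype hm' h
    rw [Submodule.map_bot, Submodule.map_top, Submodule.range_subtype] at this
    exact this
  obtain ⟨A, ⟨⟨hA, hA0⟩, hAmin'⟩⟩ := exists_minimal_of_wellFoundedLT
    (fun X : Submodule F L => IsIdeal m X ∧ X ≠ ⊥) ⟨⊤, fun x y _ => ⟨trivial, trivial⟩, htriv⟩
  have hAmin : ∀ X : Submodule F L, IsIdeal m X → X ≤ A → X = ⊥ ∨ X = A := by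
    intro X hX hXA
    by_cases h : X = ⊥
    · exact Or.inl h
    · exact Or.inr (le_antisymm hXA (hAmin' ⟨hX, h⟩ hXA))
  obtain ⟨B, hBid, hBA, hBsymm, hB0⟩ := symm_isIdeal hm hA
  by_cases hAA : mprod m A A = ⊥
  · -- abelian minimal ideal
    have hAA' : ∀ x ∈ A, ∀ y ∈ A, m x y = 0 := by
      intro x hx y hy
      rw [← Submodule.mem_bot F, ← hAA]
      exact Submodule.apply_mem_map₂ _ hx hy
    obtain ⟨w, hwA, hw0, hw⟩ := common_eig (m := m) (M := ⊤) (U := ⊥) (W := A) (A := A) hm hP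
      (fun _ _ _ _ => trivial)
      (fun x _ u hu => by rw [Submodule.mem_bot] at hu; subst hu; simp)
      (fun x _ w hw => (hA x w hw).1) (bot_lt_iff_ne_bot.2 hA0)
      ⟨le_top, fun x _ y hy => hA x y hy⟩
      (fun x hx w hw => by rw [hAA' x hx w hw]; exact Submodule.zero_mem _) (hQuot A hA hA0)
    rw [Submodule.mem_bot] at hw0
    have hl : ∀ x, m x w ∈ span F {w} := by
      intro x
      obtain ⟨ν, hν⟩ := hw x trivial
      rw [Submodule.mem_bot, sub_eq_zero] at hν
      rw [hν]; exact Submodule.smul_mem _ _ (mem_span_singleton_self _)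
    have hr : ∀ x, m w x ∈ span F {w} := by
      intro x
      rcases hAmin B hBid hBA with h | h
      · have h1 := hBsymm w hwA x
        rw [h, Submodule.mem_bot] at h1
        rw [eq_neg_of_add_eq_zero_left h1]
        exact Submodule.neg_mem _ (hl x)
      · rw [hB0 w (h ▸ hwA) x]; exact Submodule.zero_mem _
    have hwid : IsIdeal m (span F {w}) := by
      intro x y hy
      obtain ⟨t, rfl⟩ := Submodule.mem_span_singleton.1 hy
      rw [map_smul, map_smul, LinearMap.smul_apply]
      exact ⟨Submodule.smul_mem _ _ (hl x), Submodule.smul_mem _ _ (hr x)⟩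
    refine (hQuot _ hwid (by rwa [Ne, Submodule.span_singleton_eq_bot])).trans ?_
    have := Chain.step (m := m) (S := ⊤) (A := ⊥) ⊥ w Chain.base
      (by rw [bot_sup_eq]; exact ⟨le_top, fun x _ y hy => hwid x y hy⟩)
    rwa [bot_sup_eq] at this
  -- perfect minimal ideal
  have hAle : mprod m A A ≤ A := by
    rw [mprod, Submodule.map₂_le]
    exact fun x _ y hy => (hA x y hy).1
  have hAA' : mprod m A A = A := (hAmin _ (mprod_isIdeal hm hA) hAle).resolve_left hAA
  by_cases hAt : A = ⊤
  swap
  · exact absurd (eq_bot_of_perfect hm (hSub A (fun x _ y hy => (hA x y hy).1) hAt) hAA'.ge) hA0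
  subst hAt
  have hsimple : ∀ I : Submodule F L, IsIdeal m I → I = ⊥ ∨ I = ⊤ :=
    fun I hI => hAmin I hI le_top
  have hnz : ∀ I : Submodule F L, IsIdeal m I → (∀ b ∈ I, ∀ x, m b x = 0) → I = ⊥ := by
    intro I hI h0
    rcases hsimple I hI with h | h
    · exact h
    · exfalso
      apply hAA
      rw [eq_bot_iff, mprod, Submodule.map₂_le]
      intro x _ y _
      rw [h0 x (h ▸ trivial) y]; exact Submodule.zero_mem _
  have hBbot := hnz B hBid hB0
  have hanti : ∀ x y, m x y = - m y x := by
    intro x y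
    have := hBsymm x trivial y
    rw [hBbot, Submodule.mem_bot] at this
    exact eq_neg_of_add_eq_zero_left this
  have hsq : ∀ x, m x x = 0 := by
    intro x
    have h1 : ∀ y, m (m x x) y = 0 := by
      intro y
      have := hm x x y
      simpa using this
    have h2 : ∀ b ∈ span F {m x x}, ∀ y, m b y = 0 := by
      intro b hb y
      obtain ⟨t, rfl⟩ := Submodule.mem_span_singleton.1 hb
      rw [map_smul, LinearMap.smul_apply, h1, smul_zero]
    have := hnz (span F {m x x}) (by
      intro y b hb
      rw [hanti y b, h2 b hb y, neg_zero]
      exact ⟨Submodule.zero_mem _, Submodule.zero_mem _⟩) h2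
    rwa [Submodule.span_singleton_eq_bot] at this
  obtain ⟨M, ⟨⟨hM, hMt⟩, hMmax⟩⟩ := exists_maximal_of_wellFoundedGT
    (fun X : Submodule F L => IsSubalg m X ∧ X ≠ ⊤)
    ⟨⊥, fun x hx y _ => by rw [Submodule.mem_bot] at hx; subst hx; simp, Ne.symm htriv⟩
  obtain ⟨w, -, hwM, hw⟩ := common_eig (m := m) (M := M) (U := M) (W := ⊤) (A := ⊥) hm hP
    hM hM (fun _ _ _ _ => trivial) (lt_top_iff_ne_top.2 hMt) (isIdealOf_bot M)
    (fun x hx w _ => by rw [Submodule.mem_bot] at hx; subst hx; simp) (hSub M hM hMt)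
  have hxw : ∀ x ∈ M, m x w ∈ M ⊔ span F {w} := by
    intro x hx
    obtain ⟨ν, hν⟩ := hw x hx
    rw [Submodule.mem_sup]
    exact ⟨_, hν, ν • w, Submodule.smul_mem _ _ (mem_span_singleton_self _), by abel⟩
  have hsa : IsSubalg m (M ⊔ span F {w}) := by
    intro x hx y hy
    obtain ⟨i, hi, z, hz, e⟩ := Submodule.mem_sup.1 hx
    obtain ⟨s, rfl⟩ := Submodule.mem_span_singleton.1 hz
    obtain ⟨i', hi', z', hz', e'⟩ := Submodule.mem_sup.1 hy
    obtain ⟨s', rfl⟩ := Submodule.mem_span_singleton.1 hz'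
    rw [← e, ← e']
    simp only [map_add, map_smul, LinearMap.add_apply, LinearMap.smul_apply, hsq, smul_zero,
      add_zero]
    refine Submodule.add_mem _ (Submodule.add_mem _ (Submodule.mem_sup_left (hM i hi i' hi')) ?_) ?_
    · rw [hanti]
      exact Submodule.smul_mem _ _ (Submodule.neg_mem _ (hxw i' hi'))
    · exact Submodule.smul_mem _ _ (hxw i hi)
  have hMw : M ⊔ span F {w} = ⊤ := by
    by_contra hne
    have := hMmax ⟨hsa, hne⟩ le_sup_left
    exact hwM (this (Submodule.mem_sup_right (mem_span_singleton_self _)))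
  exact ss_of_codim_one hm hP hanti hM hMt hsimple w hMw

end Main

end LeibAux


/-- Let `L` be a finite-dimensional Leibniz algebra such that every
two-generated proper subalgebra of `L` is supersolvable, `L` itself is not
supersolvable, and `φ(L) = 0`. Then every proper subalgebra of `L` is supersolvable,
i.e. `L` is minimally non-supersolvable. -/
theorem minimally_non_supersolvable_of_two_generated_supersolvable
    {F : Type*} [Field F] {L : Type*} [AddCommGroup L] [Module F L]
    [FiniteDimensional F L]
    (m : L →ₗ[F] L →ₗ[F] L) (hm : IsLeibniz m)
    (h2gen : ∀ S : Submodule F L, IsSubalg m S → S ≠ ⊤ → TwoGenerated m S →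
      IsSupersolvable m S)
    (hnotsuper : ¬ IsSupersolvable m (⊤ : Submodule F L))
    (hphi : frattiniIdeal m = ⊥) :
    ∀ S : Submodule F L, IsSubalg m S → S ≠ ⊤ → IsSupersolvable m S := by
  intro S hS hSt
  obtain ⟨m', hm'⟩ := LeibAux.exists_sub hS
  have hinj : Function.Injective S.subtype := S.injective_subtype
  have h := LeibAux.ss_top (Module.finrank F S) S m' rfl (by
    intro a b c
    apply hinj
    rw [map_add]
    simp only [hm']
    exact hm _ _ _) (by
    intro x y
    apply LeibAux.SS.pullback (m' := m) S.subtype hm' hinj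
    rw [LeibAux.map_genBy (m' := m) S.subtype hm', Set.image_pair]
    apply LeibAux.ss_of_isSupersolvable
    refine h2gen _ (LeibAux.genBy_isSubalg _) ?_ ⟨_, _, rfl⟩
    intro htop
    apply hSt
    rw [eq_top_iff, ← htop]
    refine LeibAux.genBy_le hS ?_
    rintro z (rfl | rfl)
    · exact x.2
    · exact y.2)
  apply LeibAux.isSupersolvable_of_ss
  have := LeibAux.Chain.map (m' := m) S.subtype hm' h
  rw [Submodule.map_bot, Submodule.map_top, Submodule.range_subtype] at this
  exact this
end
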